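/- arXiv:1806.04369 — 3 statements merged into one kernel-verified Lean document; each statement's English description precedes it below -/
import Mathlib

section
/- Let p be an odd prime and let d, e, f be positive integers with d ≤ e, f ≤ e and e ≤ d + f. Then the order of the automorphism group of M₁(p,d,e,f) is: p^{4e−3}(p²−1)(p−1) if f = e = d; p^{2(e+f)−1}(p−1) if f < e = d; p^{3d+e−2}(p−1)² if d < f = e; p^{3d+f−1}(p−1) if d ≤ f < e; and p^{2(d+f)−1}(p−1) if f < d < e. -/
/-- Relators for the group `M₁(p,d,e,f) = ⟨a, b ∣ a^(p^e) = b^(p^d) = 1, b⁻¹ab = a^(1+p^f)⟩`,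
where `a` is generator `0` and `b` is generator `1`. -/
def M1rels (p d e f : ℕ) : Set (FreeGroup (Fin 2)) :=
  {FreeGroup.of 0 ^ p ^ e, FreeGroup.of 1 ^ p ^ d,
    (FreeGroup.of 1)⁻¹ * FreeGroup.of 0 * FreeGroup.of 1 * (FreeGroup.of 0 ^ (1 + p ^ f))⁻¹}

/-- The metacyclic group `M₁(p,d,e,f) = ⟨a, b ∣ a^(p^e) = b^(p^d) = 1, b⁻¹ab = a^(1+p^f)⟩`. -/
abbrev M1 (p d e f : ℕ) : Type := PresentedGroup (M1rels p d e f)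

/-- The canonical generator `a` of `M₁(p,d,e,f)`. -/
def M1a (p d e f : ℕ) : M1 p d e f := PresentedGroup.of 0

/-- The canonical generator `b` of `M₁(p,d,e,f)`. -/
def M1b (p d e f : ℕ) : M1 p d e f := PresentedGroup.of 1

/-- Relators for the group `M₂(p,d,e,f) = ⟨a, b ∣ a^(p^d) = b^(p^e) = 1, b⁻¹ab = a^(1+p^f)⟩`,
where `a` is generator `0` and `b` is generator `1`. -/
def M2rels (p d e f : ℕ) : Set (FreeGroup (Fin 2)) :=
  {FreeGroup.of 0 ^ p ^ d, FreeGroup.of 1 ^ p ^ e,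
    (FreeGroup.of 1)⁻¹ * FreeGroup.of 0 * FreeGroup.of 1 * (FreeGroup.of 0 ^ (1 + p ^ f))⁻¹}

/-- The metacyclic group `M₂(p,d,e,f) = ⟨a, b ∣ a^(p^d) = b^(p^e) = 1, b⁻¹ab = a^(1+p^f)⟩`. -/
abbrev M2 (p d e f : ℕ) : Type := PresentedGroup (M2rels p d e f)

/-- The canonical generator `a` of `M₂(p,d,e,f)`. -/
def M2a (p d e f : ℕ) : M2 p d e f := PresentedGroup.of 0

/-- The canonical generator `b` of `M₂(p,d,e,f)`. -/
def M2b (p d e f : ℕ) : M2 p d e f := PresentedGroup.of 1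

/-- Relators for the group
`M₃(p,d,e,h,f) = ⟨a, b ∣ a^(p^h) = 1, b^(p^(d+e-h)) = a^(p^d), b⁻¹ab = a^(1+p^f)⟩`,
where `a` is generator `0` and `b` is generator `1`. -/
def M3rels (p d e h f : ℕ) : Set (FreeGroup (Fin 2)) :=
  {FreeGroup.of 0 ^ p ^ h, FreeGroup.of 1 ^ p ^ (d + e - h) * (FreeGroup.of 0 ^ p ^ d)⁻¹,
    (FreeGroup.of 1)⁻¹ * FreeGroup.of 0 * FreeGroup.of 1 * (FreeGroup.of 0 ^ (1 + p ^ f))⁻¹}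

/-- The non-split metacyclic group
`M₃(p,d,e,h,f) = ⟨a, b ∣ a^(p^h) = 1, b^(p^(d+e-h)) = a^(p^d), b⁻¹ab = a^(1+p^f)⟩`. -/
abbrev M3 (p d e h f : ℕ) : Type := PresentedGroup (M3rels p d e h f)

/-- The canonical generator `a` of `M₃(p,d,e,h,f)`. -/
def M3a (p d e h f : ℕ) : M3 p d e h f := PresentedGroup.of 0

/-- The canonical generator `b` of `M₃(p,d,e,h,f)`. -/
def M3b (p d e h f : ℕ) : M3 p d e h f := PresentedGroup.of 1

/-- `(α, β)` is an exact `(m,n)`-bicyclic pair of `G`: `α` has order `m`, `β` has order `n`,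
`⟨α⟩ ∩ ⟨β⟩ = 1`, and `G = ⟨α⟩⟨β⟩`. -/
def IsExactBicyclicPair {G : Type*} [Group G] (m n : ℕ) (α β : G) : Prop :=
  orderOf α = m ∧ orderOf β = n ∧
    Subgroup.zpowers α ⊓ Subgroup.zpowers β = ⊥ ∧
    ∀ g : G, ∃ i j : ℤ, g = α ^ i * β ^ j

/-! ### Geometric sums with unipotent base -/

theorem geom_sum_range_mul {R : Type*} [CommRing R] (u : R) (n k : ℕ) :
    ∑ m ∈ Finset.range (n * k), u ^ m =
      (∑ m ∈ Finset.range n, u ^ m) * ∑ m ∈ Finset.range k, (u ^ n) ^ m := by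
  induction k with
  | zero => simp
  | succ k ih =>
    rw [Nat.mul_succ, Finset.sum_range_add, ih, Finset.sum_range_succ, mul_add, ← pow_mul]
    congr 1
    rw [Finset.sum_mul]
    exact Finset.sum_congr rfl fun m _ => by rw [pow_add, mul_comm]

/-- If `u ≡ 1 (mod p)` with `p` odd, then `1 + u + ⋯ + u^(p^r - 1) = p^r (1 + p c)`. -/
theorem exists_geom_sum_prime_pow_eq {R : Type*} [CommRing R] {p : ℕ} (hp : Odd p) {u : R}
    (hu : (p : R) ∣ u - 1) (r : ℕ) :
    ∃ c : R, ∑ m ∈ Finset.range (p ^ r), u ^ m = p ^ r * (1 + p * c) := by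
  induction r with
  | zero => exact ⟨0, by simp⟩
  | succ r ih =>
    obtain ⟨c, hc⟩ := ih
    have hv : (p : R) ∣ u ^ p ^ r - 1 := hu.trans (sub_one_dvd_pow_sub_one u _)
    obtain ⟨b, hb⟩ := hv
    obtain ⟨c', hc'⟩ := odd_sq_dvd_geom_sum₂_sub (1 : R) b hp
    have h1 : ∑ m ∈ Finset.range p, (u ^ p ^ r) ^ m = p + p ^ 2 * c' := by
      have h2 : u ^ p ^ r = 1 + p * b := by rw [← hb]; ring
      rw [h2]
      simp only [one_pow, mul_one] at hc'
      linear_combination hc'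
    refine ⟨c + c' + p * c * c', ?_⟩
    rw [pow_succ, geom_sum_range_mul, h1, hc]
    ring

theorem pow_prime_pow_eq {R : Type*} [CommRing R] {p f : ℕ} (hp : Odd p) (hf : 0 < f) (r : ℕ) :
    ∃ c : R, (1 + (p : R) ^ f) ^ p ^ r = 1 + p ^ (f + r) * (1 + p * c) := by
  obtain ⟨c, hc⟩ := exists_geom_sum_prime_pow_eq hp (u := (1 + (p : R) ^ f))
    (by simpa using dvd_pow_self (p : R) hf.ne') r
  refine ⟨c, ?_⟩
  have := mul_geom_sum (1 + (p : R) ^ f) (p ^ r)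
  rw [hc] at this
  linear_combination -this

/-! ### Products twisted by a character -/

/-- The semidirect product of an additive group `A` and the additive group of a ring `R`, on which
`A` acts by multiplication through `τ`; `⟨j, i⟩` stands for `b ^ j * a ^ i`. -/
@[ext]
structure TwistedProd {A R : Type*} [AddCommGroup A] [CommRing R] (τ : Multiplicative A →* R) where
  /-- The exponent of the acting generator. -/
  top : A
  /-- The exponent of the generator acted upon. -/
  base : R

namespace TwistedProd

section

variable {A R : Type*} [AddCommGroup A] [CommRing R] (τ : Multiplicative A →* R)

/-- The underlying type of the twisted product. -/
def equivProd : TwistedProd τ ≃ A × R where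
  toFun x := (x.top, x.base)
  invFun x := ⟨x.1, x.2⟩

instance [Finite A] [Finite R] : Finite (TwistedProd τ) := Finite.of_equiv _ (equivProd τ).symm

variable {τ}

instance : Mul (TwistedProd τ) := ⟨fun x y => ⟨x.top + y.top, x.base * τ (.ofAdd y.top) + y.base⟩⟩

instance : One (TwistedProd τ) := ⟨⟨0, 0⟩⟩

instance : Inv (TwistedProd τ) := ⟨fun x => ⟨-x.top, -(x.base * τ (.ofAdd (-x.top)))⟩⟩

@[simp] theorem mul_top (x y : TwistedProd τ) : (x * y).top = x.top + y.top := rfl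

@[simp] theorem mul_base (x y : TwistedProd τ) :
    (x * y).base = x.base * τ (.ofAdd y.top) + y.base := rfl

@[simp] theorem one_top : (1 : TwistedProd τ).top = 0 := rfl

@[simp] theorem one_base : (1 : TwistedProd τ).base = 0 := rfl

instance : Group (TwistedProd τ) := Group.ofLeftAxioms
  (fun x y z => by
    ext
    · simp [add_assoc]
    · simp only [mul_base, mul_top, ofAdd_add, map_mul]; ring)
  (fun x => by ext <;> simp)
  (fun x => by
    ext
    · exact neg_add_cancel x.top
    · change -(x.base * τ (.ofAdd (-x.top))) * τ (.ofAdd x.top) + x.base = 0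
      have h : τ (.ofAdd (-x.top)) * τ (.ofAdd x.top) = 1 := by
        rw [← map_mul, ← ofAdd_add, neg_add_cancel, ofAdd_zero, map_one]
      linear_combination -x.base * h)

@[simp] theorem pow_top (x : TwistedProd τ) (n : ℕ) : (x ^ n).top = n • x.top := by
  induction n with
  | zero => simp
  | succ n ih => rw [pow_succ, mul_top, ih, succ_nsmul]

@[simp] theorem pow_base (x : TwistedProd τ) (n : ℕ) :
    (x ^ n).base = x.base * ∑ m ∈ Finset.range n, τ (.ofAdd x.top) ^ m := by
  induction n with
  | zero => simp
  | succ n ih => rw [pow_succ', mul_base, ih, pow_top, ofAdd_nsmul, map_pow,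
      Finset.sum_range_succ]; ring

end

end TwistedProd

/-! ### Arithmetic in `ZMod (p ^ n)` -/

namespace ZMod

theorem prime_pow_cast_self (p n : ℕ) : (p : ZMod (p ^ n)) ^ n = 0 := by
  rw [← Nat.cast_pow, natCast_self]

theorem prime_pow_cast_eq_zero_of_le (p : ℕ) {n s : ℕ} (h : n ≤ s) :
    (p : ZMod (p ^ n)) ^ s = 0 :=
  pow_eq_zero_of_le h (prime_pow_cast_self p n)

theorem isUnit_of_prime_dvd_sub_one {p n : ℕ} {u : ZMod (p ^ n)}
    (hu : (p : ZMod (p ^ n)) ∣ u - 1) : IsUnit u := by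
  obtain ⟨c, hc⟩ := hu
  have h : IsNilpotent (p * c : ZMod (p ^ n)) :=
    ⟨n, by rw [mul_pow, prime_pow_cast_self, zero_mul]⟩
  have := h.isUnit_one_add
  rwa [← hc, add_sub_cancel] at this

variable {p : ℕ} [Fact p.Prime]

theorem prime_pow_mul_eq_zero_iff {n : ℕ} (s : ℕ) (z : ZMod (p ^ n)) :
    (p : ZMod (p ^ n)) ^ s * z = 0 ↔ (p : ZMod (p ^ n)) ^ (n - s) ∣ z := by
  constructor
  · intro h
    obtain ⟨m, rfl⟩ := natCast_zmod_surjective z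
    norm_cast at h ⊢
    refine Nat.cast_dvd_cast ?_
    rw [natCast_eq_zero_iff] at h
    rcases le_total n s with hs | hs
    · simp [Nat.sub_eq_zero_of_le hs]
    · obtain ⟨c, rfl⟩ := Nat.exists_eq_add_of_le hs
      rw [pow_add] at h
      simpa using Nat.dvd_of_mul_dvd_mul_left (pow_pos (Fact.out : p.Prime).pos s) h
  · rintro ⟨c, rfl⟩
    rw [← mul_assoc, ← pow_add, prime_pow_cast_eq_zero_of_le p (by lia), zero_mul]

theorem card_prime_pow_mul_eq_zero (n s : ℕ) :
    Nat.card {z : ZMod (p ^ n) // (p : ZMod (p ^ n)) ^ s * z = 0} = p ^ min n s := by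
  have h := IsAddCyclic.card_nsmulAddMonoidHom_ker (ZMod (p ^ n)) (p ^ s)
  have h2 : (p ^ n).gcd (p ^ s) = p ^ min n s := by
    rcases le_total n s with hs | hs
    · rw [min_eq_left hs, Nat.gcd_eq_left (pow_dvd_pow p hs)]
    · rw [min_eq_right hs, Nat.gcd_eq_right (pow_dvd_pow p hs)]
  rw [Nat.card_zmod, h2] at h
  rw [← h]
  refine Nat.card_congr (Equiv.subtypeEquivRight fun z => ?_)
  rw [AddMonoidHom.mem_ker, nsmulAddMonoidHom_apply, nsmul_eq_mul, Nat.cast_pow]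

/-- Reduction modulo `p` on `ZMod (p ^ n)`. -/
def primeRed (p n : ℕ) [NeZero n] : ZMod (p ^ n) →+* ZMod p :=
  castHom (dvd_pow_self p (NeZero.ne n)) _

theorem primeRed_surjective (p n : ℕ) [NeZero n] : Function.Surjective (primeRed p n) :=
  castHom_surjective _

variable {n : ℕ} [NeZero n]

theorem primeRed_eq_zero_iff (z : ZMod (p ^ n)) :
    primeRed p n z = 0 ↔ (p : ZMod (p ^ n)) ∣ z := by
  constructor
  · intro h
    obtain ⟨m, rfl⟩ := natCast_zmod_surjective z
    rw [map_natCast, natCast_eq_zero_iff] at h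
    exact Nat.cast_dvd_cast h
  · rintro ⟨c, rfl⟩
    simp

theorem prime_pow_pred_mul_eq_zero_iff (z : ZMod (p ^ n)) :
    (p : ZMod (p ^ n)) ^ (n - 1) * z = 0 ↔ primeRed p n z = 0 := by
  have := NeZero.pos n
  rw [prime_pow_mul_eq_zero_iff, primeRed_eq_zero_iff, show n - (n - 1) = 1 by lia, pow_one]

theorem primeRed_eq_zero_of_prime_pow_mul {s : ℕ} (hs : s < n) {z : ZMod (p ^ n)}
    (h : (p : ZMod (p ^ n)) ^ s * z = 0) : primeRed p n z = 0 := by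
  rw [primeRed_eq_zero_iff]
  rw [prime_pow_mul_eq_zero_iff] at h
  exact (dvd_pow_self _ (by lia)).trans h

theorem isUnit_of_primeRed_ne_zero {z : ZMod (p ^ n)} (h : primeRed p n z ≠ 0) : IsUnit z := by
  obtain ⟨w, hw⟩ := primeRed_surjective p n (primeRed p n z)⁻¹
  refine isUnit_of_mul_isUnit_left (y := w) (isUnit_of_prime_dvd_sub_one ?_)
  rw [← primeRed_eq_zero_iff, map_sub, map_mul, hw, map_one, mul_inv_cancel₀ h, sub_self]

end ZMod

namespace TwistedProd

open ZMod

theorem gen_pow_mul_gen_pow {p d e : ℕ} {τ : Multiplicative (ZMod (p ^ d)) →* ZMod (p ^ e)}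
    (m n : ℕ) :
    (⟨1, 0⟩ : TwistedProd τ) ^ m * (⟨0, 1⟩ : TwistedProd τ) ^ n = ⟨m, n⟩ := by
  ext <;> simp

variable {p d e f : ℕ} [Fact p.Prime] {τ : Multiplicative (ZMod (p ^ d)) →* ZMod (p ^ e)}

/-- The character `j ↦ (1 + p ^ f) ^ j`. -/
def IsPowChar (f : ℕ) (τ : Multiplicative (ZMod (p ^ d)) →* ZMod (p ^ e)) : Prop :=
  ∀ n : ℕ, τ (.ofAdd (n : ZMod (p ^ d))) = (1 + (p : ZMod (p ^ e)) ^ f) ^ n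

theorem exists_isPowChar (hodd : Odd p) (hf : 0 < f) (hedf : e ≤ d + f) :
    ∃ τ : Multiplicative (ZMod (p ^ d)) →* ZMod (p ^ e), IsPowChar f τ := by
  have ht : (1 + (p : ZMod (p ^ e)) ^ f) ^ p ^ d = 1 := by
    obtain ⟨c, hc⟩ := pow_prime_pow_eq (R := ZMod (p ^ e)) hodd hf d
    rw [hc, prime_pow_cast_eq_zero_of_le p (by lia), zero_mul, add_zero]
  have hpow : ∀ n : ℕ, (1 + (p : ZMod (p ^ e)) ^ f) ^ (n % p ^ d) =
      (1 + (p : ZMod (p ^ e)) ^ f) ^ n := fun n => (pow_eq_pow_mod n ht).symm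
  refine ⟨
    { toFun := fun j => (1 + (p : ZMod (p ^ e)) ^ f) ^ (j.toAdd : ZMod (p ^ d)).val
      map_one' := by simp
      map_mul' := fun x y => by rw [toAdd_mul, val_add, hpow, pow_add] }, fun n => ?_⟩
  change (1 + (p : ZMod (p ^ e)) ^ f) ^ (n : ZMod (p ^ d)).val = _
  rw [val_natCast, hpow]

namespace IsPowChar

theorem dvd_sub_one (hτ : IsPowChar f τ) (hf : 0 < f) (j : ZMod (p ^ d)) :
    (p : ZMod (p ^ e)) ∣ τ (.ofAdd j) - 1 := by
  obtain ⟨n, rfl⟩ := natCast_zmod_surjective j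
  rw [hτ]
  refine dvd_trans ?_ (sub_one_dvd_pow_sub_one _ n)
  simpa using dvd_pow_self (p : ZMod (p ^ e)) hf.ne'

theorem mul_eq_self_of_prime_mul (hτ : IsPowChar f τ) (hf : 0 < f) {z : ZMod (p ^ e)}
    (hz : p * z = 0) (j : ZMod (p ^ d)) : z * τ (.ofAdd j) = z := by
  obtain ⟨c, hc⟩ := hτ.dvd_sub_one hf j
  linear_combination z * hc + c * hz

theorem mul_eq_self_of_prime_pow_mul (hτ : IsPowChar f τ) (hodd : Odd p) (hf : 0 < f)
    {j : ZMod (p ^ d)} {k : ZMod (p ^ e)} (hj : (p : ZMod (p ^ d)) ^ f * j = 0)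
    (hk : (p : ZMod (p ^ e)) ^ d * k = 0) : k * τ (.ofAdd j) = k := by
  rw [prime_pow_mul_eq_zero_iff] at hj
  obtain ⟨c, rfl⟩ := hj
  obtain ⟨n, rfl⟩ := natCast_zmod_surjective c
  have h : τ (.ofAdd ((p : ZMod (p ^ d)) ^ (d - f) * n)) =
      ((1 + (p : ZMod (p ^ e)) ^ f) ^ p ^ (d - f)) ^ n := by
    rw [← pow_mul, ← hτ]; norm_cast
  obtain ⟨a, ha⟩ := pow_prime_pow_eq (R := ZMod (p ^ e)) hodd hf (d - f)
  have h1 : (p : ZMod (p ^ e)) ^ d ∣ (1 + (p : ZMod (p ^ e)) ^ f) ^ p ^ (d - f) - 1 := by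
    rw [ha, add_sub_cancel_left]
    exact (pow_dvd_pow _ (by lia)).mul_right _
  obtain ⟨b, hb⟩ := h1.trans (sub_one_dvd_pow_sub_one _ n)
  rw [h]
  linear_combination k * hb + b * hk

theorem primeRed_eq_one [NeZero e] (hτ : IsPowChar f τ) (hf : 0 < f) (j : ZMod (p ^ d)) :
    primeRed p e (τ (.ofAdd j)) = 1 := by
  have := (primeRed_eq_zero_iff _).2 (hτ.dvd_sub_one hf j)
  rwa [map_sub, map_one, sub_eq_zero] at this

theorem pow_prime_pow_base (hτ : IsPowChar f τ) (hodd : Odd p) (hf : 0 < f) (x : TwistedProd τ)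
    (r : ℕ) : ∃ c, (x ^ p ^ r).base = p ^ r * x.base * (1 + p * c) := by
  obtain ⟨c, hc⟩ := exists_geom_sum_prime_pow_eq hodd (hτ.dvd_sub_one hf x.top) r
  exact ⟨c, by rw [pow_base, hc]; ring⟩

theorem pow_prime_pow_eq_one_iff (hτ : IsPowChar f τ) (hodd : Odd p) (hf : 0 < f)
    (x : TwistedProd τ) (r : ℕ) :
    x ^ p ^ r = 1 ↔ (p : ZMod (p ^ d)) ^ r * x.top = 0 ∧ (p : ZMod (p ^ e)) ^ r * x.base = 0 := by
  obtain ⟨c, hc⟩ := hτ.pow_prime_pow_base hodd hf x r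
  have hu : IsUnit (1 + p * c : ZMod (p ^ e)) := isUnit_of_prime_dvd_sub_one (by simp)
  rw [TwistedProd.ext_iff, hc, pow_top, one_top, one_base, hu.mul_left_eq_zero, nsmul_eq_mul,
    Nat.cast_pow]

theorem mul_eq_mul_pow_iff (hτ : IsPowChar f τ) (hodd : Odd p) (hf : 0 < f)
    {x y : TwistedProd τ} (hy : (p : ZMod (p ^ e)) ^ d * y.base = 0) :
    x * y = y * x ^ (1 + p ^ f) ↔ (p : ZMod (p ^ d)) ^ f * x.top = 0 ∧
      x.base * (τ (.ofAdd y.top) -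
        ∑ m ∈ Finset.range (1 + p ^ f), τ (.ofAdd x.top) ^ m) = 0 := by
  have h1 : x.top + y.top = y.top + (1 + p ^ f) • x.top ↔
      (p : ZMod (p ^ d)) ^ f * x.top = 0 := by
    rw [add_comm, add_right_inj, add_smul, one_smul, nsmul_eq_mul, Nat.cast_pow, left_eq_add]
  rw [TwistedProd.ext_iff, mul_top, mul_top, mul_base, mul_base, pow_top, pow_base, h1]
  refine and_congr_right fun hx => ?_
  rw [← h1] at hx
  rw [← add_left_cancel ((add_comm _ _).trans hx),
    hτ.mul_eq_self_of_prime_pow_mul hodd hf (h1.1 hx) hy, add_comm, add_right_inj, mul_sub,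
    sub_eq_zero]

/-- The universal property of the twisted product. -/
theorem exists_lift (hτ : IsPowChar f τ) {K : Type*} [Group K] {x y : K} (hx : x ^ p ^ e = 1)
    (hy : y ^ p ^ d = 1) (hxy : x * y = y * x ^ (1 + p ^ f)) :
    ∃ φ : TwistedProd τ →* K, ∀ m n : ℕ, φ ⟨m, n⟩ = y ^ m * x ^ n := by
  have key : ∀ m n : ℕ,
      y ^ (m : ZMod (p ^ d)).val * x ^ (n : ZMod (p ^ e)).val = y ^ m * x ^ n := fun m n => by
    rw [val_natCast, val_natCast, ← pow_eq_pow_mod _ hx, ← pow_eq_pow_mod _ hy]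
  have hcomm : ∀ m n : ℕ, x ^ n * y ^ m = y ^ m * x ^ (n * (1 + p ^ f) ^ m) := by
    intro m
    induction m with
    | zero => simp
    | succ m ih =>
      intro n
      have h : SemiconjBy y (x ^ (1 + p ^ f)) x := hxy.symm
      have h2 := (h.pow_right (n * (1 + p ^ f) ^ m)).eq
      rw [pow_succ y, ← mul_assoc, ih, mul_assoc, ← h2, ← pow_mul, mul_assoc]
      congr 3
      ring
  refine ⟨MonoidHom.mk' (fun z => y ^ z.top.val * x ^ z.base.val) ?_, key⟩
  rintro ⟨j, i⟩ ⟨l, k⟩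
  obtain ⟨j, rfl⟩ := natCast_zmod_surjective j
  obtain ⟨i, rfl⟩ := natCast_zmod_surjective i
  obtain ⟨l, rfl⟩ := natCast_zmod_surjective l
  obtain ⟨k, rfl⟩ := natCast_zmod_surjective k
  simp only [mul_top, mul_base, hτ l, key]
  have := key (j + l) (i * (1 + p ^ f) ^ l + k)
  push_cast at this
  rw [this, pow_add, pow_add, mul_assoc, mul_assoc, ← mul_assoc (x ^ i), hcomm, mul_assoc]

end IsPowChar

theorem nonempty_mulEquiv_M1 (hτ : IsPowChar f τ) :
    Nonempty (M1 p d e f ≃* TwistedProd τ) := by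
  have hrel : ∀ {r : FreeGroup (Fin 2)}, r ∈ M1rels p d e f →
      (PresentedGroup.mk (M1rels p d e f)) r = 1 := PresentedGroup.one_of_mem
  have ha : M1a p d e f ^ p ^ e = 1 := hrel (Or.inl rfl)
  have hb : M1b p d e f ^ p ^ d = 1 := hrel (Or.inr (Or.inl rfl))
  have hab : (M1b p d e f)⁻¹ * M1a p d e f * M1b p d e f * (M1a p d e f ^ (1 + p ^ f))⁻¹ = 1 :=
    hrel (Or.inr (Or.inr rfl))
  rw [mul_inv_eq_one, mul_assoc, inv_mul_eq_iff_eq_mul] at hab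
  obtain ⟨φ, hφ⟩ := hτ.exists_lift ha hb hab
  let v : Fin 2 → TwistedProd τ := ![⟨0, 1⟩, ⟨1, 0⟩]
  have hv : ∀ r ∈ M1rels p d e f, FreeGroup.lift v r = 1 := by
    have h1 := hτ 1
    rw [Nat.cast_one, pow_one] at h1
    rintro r (rfl | rfl | rfl)
    · ext <;> simp [v]
    · ext <;> simp [v]
    · simp only [map_mul, map_inv, map_pow, FreeGroup.lift_apply_of]
      rw [mul_inv_eq_one, mul_assoc, inv_mul_eq_iff_eq_mul]
      ext <;> simp [v, h1]
  refine ⟨MonoidHom.toMulEquiv (PresentedGroup.toGroup hv) φ ?_ ?_⟩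
  · refine PresentedGroup.ext fun i => ?_
    have h1 := hφ 0 1
    have h2 := hφ 1 0
    simp only [Nat.cast_zero, Nat.cast_one, pow_zero, pow_one, one_mul, mul_one] at h1 h2
    rw [MonoidHom.comp_apply, PresentedGroup.toGroup.of]
    fin_cases i
    · exact h1
    · exact h2
  · refine MonoidHom.ext fun z => ?_
    obtain ⟨j, i⟩ := z
    obtain ⟨m, rfl⟩ := natCast_zmod_surjective j
    obtain ⟨n, rfl⟩ := natCast_zmod_surjective i
    rw [MonoidHom.comp_apply, hφ, map_mul, map_pow, map_pow, M1a, M1b,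
      PresentedGroup.toGroup.of, PresentedGroup.toGroup.of]
    exact gen_pow_mul_gen_pow m n

theorem isPGroup (hτ : IsPowChar f τ) (hodd : Odd p) (hf : 0 < f) (hde : d ≤ e) :
    IsPGroup p (TwistedProd τ) := fun x => ⟨e, by
  rw [hτ.pow_prime_pow_eq_one_iff hodd hf, prime_pow_cast_self,
    prime_pow_cast_eq_zero_of_le p hde, zero_mul, zero_mul]
  exact ⟨rfl, rfl⟩⟩

theorem geom_sum_eq (hτ : IsPowChar f τ) (hodd : Odd p) (hf : 0 < f) (j : ZMod (p ^ d)) :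
    ∃ c : ZMod (p ^ e), ∑ m ∈ Finset.range (1 + p ^ f), τ (.ofAdd j) ^ m =
      1 + p ^ f * (1 + p * c) := by
  obtain ⟨b, hb⟩ := hτ.dvd_sub_one hf j
  obtain ⟨c, hc⟩ := exists_geom_sum_prime_pow_eq hodd ⟨b, hb⟩ f
  have h := mul_geom_sum (τ (.ofAdd j)) (p ^ f)
  rw [hc, hb] at h
  refine ⟨c + b * (1 + p * c), ?_⟩
  rw [add_comm 1, Finset.sum_range_succ, hc]
  linear_combination -h

theorem orderOf_one_add_prime_pow (hodd : Odd p) (hf : 0 < f) (hfe : f ≤ e) :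
    orderOf (1 + (p : ZMod (p ^ e)) ^ f) = p ^ (e - f) := by
  obtain ⟨n, rfl⟩ := Nat.exists_eq_add_of_le' hfe
  have hp : p.Prime := Fact.out
  have hp3 : 3 ≤ p := by
    have := hp.two_le
    rcases hodd with ⟨k, rfl⟩
    lia
  have h := orderOf_one_add_mul_prime_pow hp f hf.ne' (by nlinarith) 1
    (by exact_mod_cast hp.one_lt.ne' ∘ Nat.dvd_one.1) n
  rw [Nat.add_sub_cancel]
  simpa using h

theorem exists_pow_eq (hodd : Odd p) (hf : 0 < f) (hfe : f ≤ e) {v : ZMod (p ^ e)}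
    (hv : (p : ZMod (p ^ e)) ^ f ∣ v - 1) : ∃ n : ℕ, (1 + (p : ZMod (p ^ e)) ^ f) ^ n = v := by
  have hmem : ∀ v : ZMod (p ^ e), (p : ZMod (p ^ e)) ^ (e - f) * (v - 1) = 0 ↔
      (p : ZMod (p ^ e)) ^ f ∣ v - 1 := fun v => by
    rw [prime_pow_mul_eq_zero_iff, Nat.sub_sub_self hfe]
  let F : Fin (p ^ (e - f)) → {v : ZMod (p ^ e) // (p : ZMod (p ^ e)) ^ (e - f) * (v - 1) = 0} :=
    fun n => ⟨(1 + (p : ZMod (p ^ e)) ^ f) ^ (n : ℕ), (hmem _).2 (by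
      simpa using sub_one_dvd_pow_sub_one (1 + (p : ZMod (p ^ e)) ^ f) n)⟩
  have hF : Function.Injective F := fun m n h => Fin.ext (by
    refine pow_injOn_Iio_orderOf ?_ ?_ (congrArg Subtype.val h)
    · rw [orderOf_one_add_prime_pow hodd hf hfe]; exact m.2
    · rw [orderOf_one_add_prime_pow hodd hf hfe]; exact n.2)
  have hcard : Nat.card {v : ZMod (p ^ e) // (p : ZMod (p ^ e)) ^ (e - f) * (v - 1) = 0} ≤
      Nat.card (Fin (p ^ (e - f))) := by
    have h := Nat.card_congr ((Equiv.subRight (1 : ZMod (p ^ e))).subtypeEquiv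
      (p := fun v => (p : ZMod (p ^ e)) ^ (e - f) * (v - 1) = 0)
      (q := fun z => (p : ZMod (p ^ e)) ^ (e - f) * z = 0) fun _ => Iff.rfl)
    rw [h, card_prime_pow_mul_eq_zero, Nat.card_fin, min_eq_right (Nat.sub_le e f)]
  obtain ⟨n, hn⟩ := (hF.bijective_of_nat_card_le hcard).2 ⟨v, (hmem v).2 hv⟩
  exact ⟨n, congrArg Subtype.val hn⟩

theorem IsPowChar.eq_one_iff (hτ : IsPowChar f τ) (hodd : Odd p) (hf : 0 < f) (hfe : f ≤ e)
    (hedf : e ≤ d + f) (z : ZMod (p ^ d)) :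
    τ (.ofAdd z) = 1 ↔ (p : ZMod (p ^ d)) ^ (d + f - e) * z = 0 := by
  obtain ⟨n, rfl⟩ := natCast_zmod_surjective z
  have hd : p ^ d = p ^ (d + f - e) * p ^ (e - f) := by
    rw [← pow_add]; congr 1; lia
  rw [hτ, ← orderOf_dvd_iff_pow_eq_one, orderOf_one_add_prime_pow hodd hf hfe,
    ← Nat.cast_pow, ← Nat.cast_mul, natCast_eq_zero_iff]
  rw [hd]
  exact (Nat.mul_dvd_mul_iff_left (pow_pos (Fact.out : p.Prime).pos _)).symm

theorem IsPowChar.card_fiber (hτ : IsPowChar f τ) (hodd : Odd p) (hf : 0 < f) (hfe : f ≤ e)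
    (hedf : e ≤ d + f) {v : ZMod (p ^ e)} (hv : (p : ZMod (p ^ e)) ^ f ∣ v - 1) :
    Nat.card {l : ZMod (p ^ d) // τ (.ofAdd l) = v} = p ^ (d + f - e) := by
  obtain ⟨n, rfl⟩ := exists_pow_eq hodd hf hfe hv
  rw [← hτ]
  set l₀ := (n : ZMod (p ^ d))
  have hl : IsUnit (τ (.ofAdd l₀)) := (Group.isUnit (Multiplicative.ofAdd l₀)).map τ
  rw [Nat.card_congr ((Equiv.subRight l₀).subtypeEquiv
    (q := fun z => (p : ZMod (p ^ d)) ^ (d + f - e) * z = 0) fun l => ?_),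
    card_prime_pow_mul_eq_zero, min_eq_right (by lia)]
  have h : τ (.ofAdd (l - l₀)) * τ (.ofAdd l₀) = τ (.ofAdd l) := by
    rw [← map_mul, ← ofAdd_add, sub_add_cancel]
  rw [← hτ.eq_one_iff hodd hf hfe hedf, Equiv.subRight_apply, ← h, hl.mul_eq_right]

theorem conj_of_le (hτ : IsPowChar f τ) (hef : e ≤ f) (x y : TwistedProd τ) :
    x.base * (τ (.ofAdd y.top) -
      ∑ m ∈ Finset.range (1 + p ^ f), τ (.ofAdd x.top) ^ m) = 0 := by
  have h : ∀ j : ZMod (p ^ d), τ (.ofAdd j) = 1 := fun j => by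
    obtain ⟨n, rfl⟩ := natCast_zmod_surjective j
    rw [hτ, prime_pow_cast_eq_zero_of_le p hef, add_zero, one_pow]
  simp [h, prime_pow_cast_eq_zero_of_le p hef]

variable [NeZero d] [NeZero e]

/-- The condition for `a ↦ x`, `b ↦ y` to define an automorphism of the twisted product. -/
structure IsAutPair (f : ℕ) (x y : TwistedProd τ) : Prop where
  left_top : (p : ZMod (p ^ d)) ^ f * x.top = 0
  right_base : (p : ZMod (p ^ e)) ^ d * y.base = 0
  conj : x.base * (τ (.ofAdd y.top) -
    ∑ m ∈ Finset.range (1 + p ^ f), τ (.ofAdd x.top) ^ m) = 0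
  det_ne_zero : primeRed p e x.base * primeRed p d y.top -
    primeRed p d x.top * primeRed p e y.base ≠ 0

theorem primeRed_pow_mul_pow (hτ : IsPowChar f τ) (hf : 0 < f) (x y : TwistedProd τ) (m n : ℕ) :
    primeRed p d (y ^ m * x ^ n).top = m * primeRed p d y.top + n * primeRed p d x.top ∧
    primeRed p e (y ^ m * x ^ n).base = m * primeRed p e y.base + n * primeRed p e x.base := by
  constructor
  · simp
  · simp only [mul_base, pow_base, map_add, map_mul, map_sum, map_pow, hτ.primeRed_eq_one hf,
      one_pow, Finset.sum_const, Finset.card_range, nsmul_eq_mul, mul_one]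
    ring

theorem isAutPair_of_mulAut (hτ : IsPowChar f τ) (hodd : Odd p) (hf : 0 < f)
    (φ : MulAut (TwistedProd τ)) : IsAutPair f (φ ⟨0, 1⟩) (φ ⟨1, 0⟩) := by
  have hy : (φ ⟨1, 0⟩) ^ p ^ d = 1 := by
    rw [← map_pow, (hτ.pow_prime_pow_eq_one_iff hodd hf _ _).2, map_one]
    simp [prime_pow_cast_self]
  have hy' := ((hτ.pow_prime_pow_eq_one_iff hodd hf _ _).1 hy).2
  have hxy : φ ⟨0, 1⟩ * φ ⟨1, 0⟩ = φ ⟨1, 0⟩ * φ ⟨0, 1⟩ ^ (1 + p ^ f) := by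
    rw [← map_pow, ← map_mul, ← map_mul]
    congr 1
    have := hτ 1
    rw [Nat.cast_one] at this
    ext
    · simp
    · simp [this]
  obtain ⟨h1, h2⟩ := (hτ.mul_eq_mul_pow_iff hodd hf hy').1 hxy
  refine ⟨h1, hy', h2, fun h => ?_⟩
  have hsurj : ∀ z : TwistedProd τ, ∃ m n : ℕ, z = φ ⟨1, 0⟩ ^ m * φ ⟨0, 1⟩ ^ n := fun z => by
    obtain ⟨⟨j, i⟩, rfl⟩ := φ.surjective z
    obtain ⟨m, rfl⟩ := natCast_zmod_surjective j
    obtain ⟨n, rfl⟩ := natCast_zmod_surjective i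
    exact ⟨m, n, by rw [← map_pow, ← map_pow, ← map_mul, gen_pow_mul_gen_pow]⟩
  obtain ⟨m, n, h3⟩ := hsurj ⟨1, 0⟩
  obtain ⟨m', n', h4⟩ := hsurj ⟨0, 1⟩
  obtain ⟨h5, h6⟩ := primeRed_pow_mul_pow hτ hf (φ ⟨0, 1⟩) (φ ⟨1, 0⟩) m n
  obtain ⟨h7, h8⟩ := primeRed_pow_mul_pow hτ hf (φ ⟨0, 1⟩) (φ ⟨1, 0⟩) m' n'
  rw [← h3] at h5 h6
  rw [← h4] at h7 h8
  simp only [map_one, map_zero] at h5 h6 h7 h8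
  refine one_ne_zero (α := ZMod p) ?_
  linear_combination (m * n' - n * m' : ZMod p) * h +
    h5 * (m' * primeRed p e (φ ⟨1, 0⟩).base + n' * primeRed p e (φ ⟨0, 1⟩).base) -
    h6 * (m' * primeRed p d (φ ⟨1, 0⟩).top + n' * primeRed p d (φ ⟨0, 1⟩).top) + h8

theorem IsAutPair.injective (hτ : IsPowChar f τ) (hodd : Odd p) (hf : 0 < f) (hde : d ≤ e)
    {x y : TwistedProd τ} (h : IsAutPair f x y) (φ : TwistedProd τ →* TwistedProd τ)
    (hφ : ∀ m n : ℕ, φ ⟨m, n⟩ = y ^ m * x ^ n) : Function.Injective φ := by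
  rw [← MonoidHom.ker_eq_bot_iff]
  by_contra hker
  have hnt : Nontrivial φ.ker := (Subgroup.nontrivial_iff_ne_bot _).2 hker
  obtain ⟨r, hr, hcard⟩ :=
    ((isPGroup hτ hodd hf hde).to_subgroup φ.ker).nontrivial_iff_card.1 hnt
  obtain ⟨⟨⟨j, i⟩, hg⟩, hord⟩ := exists_prime_orderOf_dvd_card' (G := φ.ker) p
    (hcard ▸ dvd_pow_self p hr.ne')
  rw [Subgroup.orderOf_mk] at hord
  have hne : (⟨j, i⟩ : TwistedProd τ) ≠ 1 := fun h1 => by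
    rw [h1, orderOf_one] at hord
    exact (Fact.out : p.Prime).one_lt.ne hord
  have hgp : (⟨j, i⟩ : TwistedProd τ) ^ p ^ 1 = 1 :=
    orderOf_dvd_iff_pow_eq_one.1 (hord.trans (pow_one p).symm).dvd
  rw [hτ.pow_prime_pow_eq_one_iff hodd hf, prime_pow_mul_eq_zero_iff,
    prime_pow_mul_eq_zero_iff] at hgp
  obtain ⟨⟨m, hm⟩, ⟨n, hn⟩⟩ := hgp
  obtain ⟨m, rfl⟩ := natCast_zmod_surjective m
  obtain ⟨n, rfl⟩ := natCast_zmod_surjective n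
  dsimp only at hm hn
  subst hm hn
  have hdpos := NeZero.pos d
  have hepos := NeZero.pos e
  have hg' : (y ^ p ^ (d - 1)) ^ m * (x ^ p ^ (e - 1)) ^ n = 1 := by
    rw [← pow_mul, ← pow_mul, ← hφ, ← hg]
    push_cast
    rfl
  have htop : (p : ZMod (p ^ d)) ^ (d - 1) * (m * y.top) + p ^ (e - 1) * (n * x.top) = 0 := by
    have := congrArg top hg'
    simp only [mul_top, pow_top, one_top, nsmul_eq_mul, Nat.cast_pow] at this
    linear_combination this
  have hbase : (p : ZMod (p ^ e)) ^ (d - 1) * (m * y.base) + p ^ (e - 1) * (n * x.base) = 0 := by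
    have hpow : ∀ {z : TwistedProd τ} (r : ℕ), 0 < r → (p : ZMod (p ^ e)) ^ r * z.base = 0 →
        ∀ n : ℕ, ((z ^ p ^ (r - 1)) ^ n).base = p ^ (r - 1) * (n * z.base) ∧
          p * ((z ^ p ^ (r - 1)) ^ n).base = 0 := by
      intro z r hr hz n
      have hr' : (p : ZMod (p ^ e)) ^ r = p * p ^ (r - 1) := by
        rw [← pow_succ', Nat.sub_add_cancel hr]
      rw [hr'] at hz
      obtain ⟨c, hc⟩ := hτ.pow_prime_pow_base hodd hf z (r - 1)
      have hc' : (z ^ p ^ (r - 1)).base = p ^ (r - 1) * z.base := by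
        linear_combination hc + c * hz
      have h2 : ((z ^ p ^ (r - 1)) ^ n).base = p ^ (r - 1) * (n * z.base) := by
        rw [pow_base, Finset.mul_sum, Finset.sum_congr rfl (g := fun _ => p ^ (r - 1) * z.base)]
        · rw [Finset.sum_const, Finset.card_range, nsmul_eq_mul]; ring
        · intro k _
          rw [← map_pow, ← ofAdd_nsmul, hτ.mul_eq_self_of_prime_mul hf, hc']
          rw [hc']; linear_combination hz
      refine ⟨h2, ?_⟩
      rw [h2]
      linear_combination n * hz
    have := congrArg base hg'
    obtain ⟨h1, h2⟩ := hpow d hdpos h.right_base m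
    rw [mul_base, hτ.mul_eq_self_of_prime_mul hf h2, h1,
      (hpow e hepos (by rw [prime_pow_cast_self, zero_mul]) n).1, one_base] at this
    exact this
  suffices hmn : primeRed p d m = 0 ∧ primeRed p e n = 0 by
    obtain ⟨hm, hn⟩ := hmn
    rw [← prime_pow_pred_mul_eq_zero_iff] at hm hn
    exact hne (by rw [hm, hn]; rfl)
  have hdet := h.det_ne_zero
  rcases hde.eq_or_lt with rfl | hlt
  · rw [← mul_add, prime_pow_pred_mul_eq_zero_iff] at htop hbase
    simp only [map_add, map_mul, map_natCast] at htop hbase ⊢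
    constructor
    · refine (mul_eq_zero.1 ?_).resolve_right hdet
      linear_combination primeRed p d x.base * htop - primeRed p d x.top * hbase
    · refine (mul_eq_zero.1 ?_).resolve_right hdet
      linear_combination primeRed p d y.top * hbase - primeRed p d y.base * htop
  · have hk : primeRed p e y.base = 0 := primeRed_eq_zero_of_prime_pow_mul hlt h.right_base
    rw [hk, mul_zero, sub_zero] at hdet
    have hm : primeRed p d m = 0 := by
      rw [prime_pow_cast_eq_zero_of_le p (show d ≤ e - 1 by lia), zero_mul, add_zero,
        prime_pow_pred_mul_eq_zero_iff, map_mul] at htop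
      exact (mul_eq_zero.1 htop).resolve_right (right_ne_zero_of_mul hdet)
    refine ⟨hm, ?_⟩
    rw [map_natCast, natCast_eq_zero_iff] at hm
    obtain ⟨c, rfl⟩ := hm
    have hz : (p : ZMod (p ^ e)) ^ (d - 1) * ((p * c : ℕ) * y.base) = 0 := by
      have hd' : (p : ZMod (p ^ e)) ^ d = p ^ (d - 1) * p := by
        rw [← pow_succ, Nat.sub_add_cancel hdpos]
      have := h.right_base
      rw [hd'] at this
      push_cast
      linear_combination c * this
    rw [hz, zero_add, prime_pow_pred_mul_eq_zero_iff, map_mul] at hbase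
    exact (mul_eq_zero.1 hbase).resolve_right (left_ne_zero_of_mul hdet)

theorem natCard_mulAut (hτ : IsPowChar f τ) (hodd : Odd p) (hf : 0 < f) (hde : d ≤ e) :
    Nat.card (MulAut (TwistedProd τ)) =
      Nat.card {q : TwistedProd τ × TwistedProd τ // IsAutPair f q.1 q.2} := by
  refine Nat.card_congr (Equiv.ofBijective
    (fun φ => ⟨(φ ⟨0, 1⟩, φ ⟨1, 0⟩), isAutPair_of_mulAut hτ hodd hf φ⟩) ⟨?_, ?_⟩)
  · intro φ ψ h
    simp only [Subtype.mk.injEq, Prod.mk.injEq] at h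
    refine MulEquiv.ext fun z => ?_
    obtain ⟨j, i⟩ := z
    obtain ⟨m, rfl⟩ := natCast_zmod_surjective j
    obtain ⟨n, rfl⟩ := natCast_zmod_surjective i
    rw [← gen_pow_mul_gen_pow, map_mul, map_mul, map_pow, map_pow, map_pow, map_pow, h.1, h.2]
  · rintro ⟨⟨x, y⟩, h⟩
    have hx : x ^ p ^ e = 1 := (hτ.pow_prime_pow_eq_one_iff hodd hf x e).2
      ⟨by rw [prime_pow_cast_eq_zero_of_le p hde, zero_mul],
        by rw [prime_pow_cast_self, zero_mul]⟩
    have hy : y ^ p ^ d = 1 := (hτ.pow_prime_pow_eq_one_iff hodd hf y d).2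
      ⟨by rw [prime_pow_cast_self, zero_mul], h.right_base⟩
    obtain ⟨φ, hφ⟩ := hτ.exists_lift hx hy
      ((hτ.mul_eq_mul_pow_iff hodd hf h.right_base).2 ⟨h.left_top, h.conj⟩)
    refine ⟨MulEquiv.ofBijective φ
      (Finite.injective_iff_bijective.1 (h.injective hτ hodd hf hde φ hφ)), ?_⟩
    have h1 := hφ 0 1
    have h2 := hφ 1 0
    simp only [Nat.cast_zero, Nat.cast_one, pow_zero, pow_one, one_mul, mul_one] at h1 h2
    exact Subtype.ext (Prod.ext h1 h2)

theorem primeRed_eq_one_of_eq (hτ : IsPowChar f τ) (hf : 0 < f) (hfe : f < e)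
    {l : ZMod (p ^ d)} {c : ZMod (p ^ e)} (h : τ (.ofAdd l) = 1 + p ^ f * (1 + p * c)) :
    primeRed p d l = 1 := by
  obtain ⟨n, rfl⟩ := natCast_zmod_surjective l
  have h1 := mul_geom_sum (1 + (p : ZMod (p ^ e)) ^ f) n
  rw [← hτ, h] at h1
  have h2 := primeRed_eq_zero_of_prime_pow_mul hfe
    (z := ∑ m ∈ Finset.range n, (1 + (p : ZMod (p ^ e)) ^ f) ^ m -
      (1 + (p : ZMod (p ^ e)) * c))
    (by linear_combination h1)
  simp only [map_sub, map_sum, map_pow, map_add, map_one, map_natCast, map_mul, CharP.cast_eq_zero,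
    zero_pow hf.ne', add_zero, one_pow, Finset.sum_const, Finset.card_range, nsmul_eq_mul, mul_one,
    zero_mul, sub_eq_zero] at h2
  rw [map_natCast, h2]

theorem isAutPair_iff_of_lt (hτ : IsPowChar f τ) (hodd : Odd p) (hf : 0 < f) (hde : d ≤ e)
    (hfe : f < e) (x y : TwistedProd τ) :
    IsAutPair f x y ↔ primeRed p e x.base ≠ 0 ∧ (p : ZMod (p ^ e)) ^ d * y.base = 0 ∧
      (p : ZMod (p ^ d)) ^ f * x.top = 0 ∧
      τ (.ofAdd y.top) = ∑ m ∈ Finset.range (1 + p ^ f), τ (.ofAdd x.top) ^ m := by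
  have hzero : (p : ZMod (p ^ d)) ^ f * x.top = 0 → (p : ZMod (p ^ e)) ^ d * y.base = 0 →
      primeRed p d x.top * primeRed p e y.base = 0 := fun h1 h2 => by
    rcases hde.eq_or_lt with rfl | h
    · rw [primeRed_eq_zero_of_prime_pow_mul hfe h1, zero_mul]
    · rw [primeRed_eq_zero_of_prime_pow_mul h h2, mul_zero]
  constructor
  · rintro ⟨h1, h2, h3, h4⟩
    rw [hzero h1 h2, sub_zero] at h4
    have hx := left_ne_zero_of_mul h4
    rw [(isUnit_of_primeRed_ne_zero hx).mul_right_eq_zero, sub_eq_zero] at h3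
    exact ⟨hx, h2, h1, h3⟩
  · rintro ⟨hx, h2, h1, h3⟩
    refine ⟨h1, h2, by rw [h3, sub_self, mul_zero], ?_⟩
    obtain ⟨c, hc⟩ := geom_sum_eq hτ hodd hf x.top
    rw [hzero h1 h2, sub_zero, primeRed_eq_one_of_eq hτ hf hfe (h3.trans hc), mul_one]
    exact hx

theorem isAutPair_iff_of_lt_of_le (hτ : IsPowChar f τ) (hde : d < e) (hef : e ≤ f)
    (x y : TwistedProd τ) :
    IsAutPair f x y ↔ primeRed p e x.base ≠ 0 ∧ primeRed p d y.top ≠ 0 ∧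
      (p : ZMod (p ^ e)) ^ d * y.base = 0 := by
  have hzero : (p : ZMod (p ^ e)) ^ d * y.base = 0 → primeRed p e y.base = 0 :=
    primeRed_eq_zero_of_prime_pow_mul hde
  constructor
  · rintro ⟨-, h2, -, h4⟩
    rw [hzero h2, mul_zero, sub_zero] at h4
    exact ⟨left_ne_zero_of_mul h4, right_ne_zero_of_mul h4, h2⟩
  · rintro ⟨hx, hy, h2⟩
    refine ⟨by rw [prime_pow_cast_eq_zero_of_le p (hde.le.trans hef), zero_mul], h2,
      conj_of_le hτ hef x y, ?_⟩
    rw [hzero h2, mul_zero, sub_zero]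
    exact mul_ne_zero hx hy

end TwistedProd

/-! ### Counting -/

theorem Nat.card_subtype_comp_addMonoidHom {A B : Type*} [AddGroup A] [AddGroup B] (φ : A →+ B)
    (hφ : Function.Surjective φ) (P : B → Prop) :
    Nat.card {a // P (φ a)} = Nat.card {b // P b} * Nat.card φ.ker := by
  rw [← Nat.card_prod]
  have hs := Function.surjInv_eq hφ
  exact Nat.card_congr
    { toFun := fun a => (⟨φ a, a.2⟩, ⟨-Function.surjInv hφ (φ a) + a, by
        simp [AddMonoidHom.mem_ker, hs]⟩)
      invFun := fun q => ⟨Function.surjInv hφ q.1 + q.2, by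
        simpa [hs, (AddMonoidHom.mem_ker).1 q.2.2] using q.1.2⟩
      left_inv := fun a => by simp
      right_inv := fun q => by
        have h := (AddMonoidHom.mem_ker).1 q.2.2
        ext <;> simp [hs, h] }

theorem Matrix.card_det_ne_zero (K : Type*) [Field K] [Fintype K] (n : ℕ) :
    Nat.card {M : Matrix (Fin n) (Fin n) K // M.det ≠ 0} = Nat.card (GL (Fin n) K) := by
  classical
  refine (Nat.card_congr (Equiv.ofBijective
    (fun g : GL (Fin n) K => ⟨(g : Matrix (Fin n) (Fin n) K), g.det_ne_zero⟩) ⟨?_, ?_⟩)).symm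
  · intro g h hgh
    exact Units.ext (congrArg Subtype.val hgh)
  · rintro ⟨M, hM⟩
    exact ⟨Matrix.GeneralLinearGroup.mkOfDetNeZero M hM, rfl⟩

namespace TwistedProd

open ZMod

variable {p d e f : ℕ} [Fact p.Prime]

theorem isAutPair_iff_of_eq [NeZero e]
    {τ : Multiplicative (ZMod (p ^ e)) →* ZMod (p ^ e)}
    (hτ : IsPowChar e τ) (x y : TwistedProd τ) :
    IsAutPair e x y ↔ (!![primeRed p e x.base, primeRed p e x.top;
      primeRed p e y.base, primeRed p e y.top]).det ≠ 0 := by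
  rw [Matrix.det_fin_two_of]
  refine ⟨fun h => h.4, fun h => ⟨?_, ?_, conj_of_le hτ le_rfl x y, h⟩⟩ <;>
  rw [prime_pow_cast_self, zero_mul]

theorem card_ker_primeRed (p n : ℕ) [Fact p.Prime] [NeZero n] :
    Nat.card (primeRed p n).toAddMonoidHom.ker = p ^ (n - 1) := by
  rw [← min_eq_right (Nat.sub_le n 1), ← card_prime_pow_mul_eq_zero]
  exact Nat.card_congr (Equiv.subtypeEquivRight fun z => (prime_pow_pred_mul_eq_zero_iff z).symm)

theorem card_primeRed_ne_zero (p n : ℕ) [Fact p.Prime] [NeZero n] :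
    Nat.card {z : ZMod (p ^ n) // primeRed p n z ≠ 0} = p ^ (n - 1) * (p - 1) := by
  have h := Nat.card_subtype_comp_addMonoidHom (primeRed p n).toAddMonoidHom
    (primeRed_surjective p n) (· ≠ 0)
  rw [card_ker_primeRed, Nat.card_eq_fintype_card (α := {b : ZMod p // b ≠ 0}),
    Fintype.card_subtype_compl, ZMod.card, Fintype.card_subtype_eq, mul_comm] at h
  exact h

theorem card_isAutPair_of_lt [NeZero d] [NeZero e]
    {τ : Multiplicative (ZMod (p ^ d)) →* ZMod (p ^ e)} (hτ : IsPowChar f τ) (hodd : Odd p)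
    (hf : 0 < f) (hde : d ≤ e) (hfe : f < e) (hedf : e ≤ d + f) :
    Nat.card {q : TwistedProd τ × TwistedProd τ // IsAutPair f q.1 q.2} =
      p ^ (e - 1) * (p - 1) * (p ^ d * (p ^ min d f * p ^ (d + f - e))) := by
  let E : {q : TwistedProd τ × TwistedProd τ // IsAutPair f q.1 q.2} ≃
      {i : ZMod (p ^ e) // primeRed p e i ≠ 0} ×
      {k : ZMod (p ^ e) // (p : ZMod (p ^ e)) ^ d * k = 0} ×
        Σ j : {j : ZMod (p ^ d) // (p : ZMod (p ^ d)) ^ f * j = 0}, {l : ZMod (p ^ d) //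
          τ (.ofAdd l) = ∑ m ∈ Finset.range (1 + p ^ f), τ (.ofAdd j.1) ^ m} :=
    { toFun := fun q =>
        have h := (isAutPair_iff_of_lt hτ hodd hf hde hfe _ _).1 q.2
        (⟨q.1.1.base, h.1⟩, ⟨q.1.2.base, h.2.1⟩, ⟨⟨q.1.1.top, h.2.2.1⟩, ⟨q.1.2.top, h.2.2.2⟩⟩)
      invFun := fun r => ⟨(⟨r.2.2.1, r.1⟩, ⟨r.2.2.2, r.2.1⟩),
        (isAutPair_iff_of_lt hτ hodd hf hde hfe _ _).2
          ⟨r.1.2, r.2.1.2, r.2.2.1.2, r.2.2.2.2⟩⟩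
      left_inv := fun _ => rfl
      right_inv := fun _ => rfl }
  rw [Nat.card_congr E, Nat.card_prod, Nat.card_prod, Nat.card_sigma, card_primeRed_ne_zero,
    card_prime_pow_mul_eq_zero, min_eq_right hde, Finset.sum_congr rfl
      (g := fun _ => p ^ (d + f - e)), Finset.sum_const, Finset.card_univ,
    ← Nat.card_eq_fintype_card, card_prime_pow_mul_eq_zero, smul_eq_mul]
  intro j _
  obtain ⟨c, hc⟩ := geom_sum_eq hτ hodd hf j.1
  exact hτ.card_fiber hodd hf hfe.le hedf (by rw [hc, add_sub_cancel_left]; exact dvd_mul_right _ _)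

theorem card_isAutPair_of_lt_of_le [NeZero d] [NeZero e]
    {τ : Multiplicative (ZMod (p ^ d)) →* ZMod (p ^ e)} (hτ : IsPowChar f τ)
    (hde : d < e) (hef : e ≤ f) :
    Nat.card {q : TwistedProd τ × TwistedProd τ // IsAutPair f q.1 q.2} =
      p ^ (e - 1) * (p - 1) * (p ^ (d - 1) * (p - 1) * (p ^ d * p ^ d)) := by
  let E : {q : TwistedProd τ × TwistedProd τ // IsAutPair f q.1 q.2} ≃
      {i : ZMod (p ^ e) // primeRed p e i ≠ 0} × {l : ZMod (p ^ d) // primeRed p d l ≠ 0} ×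
        {k : ZMod (p ^ e) // (p : ZMod (p ^ e)) ^ d * k = 0} × ZMod (p ^ d) :=
    { toFun := fun q =>
        have h := (isAutPair_iff_of_lt_of_le hτ hde hef _ _).1 q.2
        (⟨q.1.1.base, h.1⟩, ⟨q.1.2.top, h.2.1⟩, ⟨q.1.2.base, h.2.2⟩, q.1.1.top)
      invFun := fun r => ⟨(⟨r.2.2.2, r.1⟩, ⟨r.2.1, r.2.2.1⟩),
        (isAutPair_iff_of_lt_of_le hτ hde hef _ _).2 ⟨r.1.2, r.2.1.2, r.2.2.1.2⟩⟩
      left_inv := fun _ => rfl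
      right_inv := fun _ => rfl }
  rw [Nat.card_congr E, Nat.card_prod, Nat.card_prod, Nat.card_prod, card_primeRed_ne_zero,
    card_primeRed_ne_zero, card_prime_pow_mul_eq_zero, min_eq_right hde.le, Nat.card_zmod]

theorem card_isAutPair_of_eq [NeZero e] {τ : Multiplicative (ZMod (p ^ e)) →* ZMod (p ^ e)}
    (hτ : IsPowChar e τ) :
    Nat.card {q : TwistedProd τ × TwistedProd τ // IsAutPair e q.1 q.2} =
      (p ^ 2 - 1) * (p ^ 2 - p) * (p ^ (e - 1)) ^ 4 := by
  let Φ : Matrix (Fin 2) (Fin 2) (ZMod (p ^ e)) →+ Matrix (Fin 2) (Fin 2) (ZMod p) :=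
    (primeRed p e).toAddMonoidHom.mapMatrix
  have hΦ : Function.Surjective Φ := fun M => by
    refine ⟨Matrix.of fun i j => Function.surjInv (primeRed_surjective p e) (M i j), ?_⟩
    ext i j
    exact Function.surjInv_eq (primeRed_surjective p e) (M i j)
  let E : {q : TwistedProd τ × TwistedProd τ // IsAutPair e q.1 q.2} ≃
      {M : Matrix (Fin 2) (Fin 2) (ZMod (p ^ e)) // (Φ M).det ≠ 0} :=
    { toFun := fun q => ⟨!![q.1.1.base, q.1.1.top; q.1.2.base, q.1.2.top], by
        rw [Matrix.det_fin_two]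
        exact q.2.4⟩
      invFun := fun M => ⟨(⟨M.1 0 1, M.1 0 0⟩, ⟨M.1 1 1, M.1 1 0⟩),
        (isAutPair_iff_of_eq hτ _ _).2 (by
          have := M.2
          rw [Matrix.det_fin_two] at this ⊢
          exact this)⟩
      left_inv := fun _ => rfl
      right_inv := fun M => Subtype.ext (Matrix.eta_fin_two M.1).symm }
  have hker : Nat.card Φ.ker = (p ^ (e - 1)) ^ 4 := by
    have hmem : ∀ M, M ∈ Φ.ker ↔ ∀ i j, M i j ∈ (primeRed p e).toAddMonoidHom.ker := fun M => by
      rw [AddMonoidHom.mem_ker, ← Matrix.ext_iff]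
      rfl
    let F : Φ.ker ≃ (Fin 2 → Fin 2 → (primeRed p e).toAddMonoidHom.ker) :=
      { toFun := fun M i j => ⟨M.1 i j, (hmem _).1 M.2 i j⟩
        invFun := fun g => ⟨Matrix.of fun i j => (g i j).1, (hmem _).2 fun i j => (g i j).2⟩
        left_inv := fun _ => rfl
        right_inv := fun _ => rfl }
    rw [Nat.card_congr F, Nat.card_fun, Nat.card_fun, card_ker_primeRed, Nat.card_fin, ← pow_mul]
  rw [Nat.card_congr E, Nat.card_subtype_comp_addMonoidHom Φ hΦ (fun M => M.det ≠ 0),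
    Matrix.card_det_ne_zero, Matrix.card_GL_field, hker]
  simp [Fin.prod_univ_two, ZMod.card]

end TwistedProd

/-- The order of `Aut(M₁(p,d,e,f))` (`d ≤ e`, `f ≤ e ≤ d + f`) is
`p^(4e-3)(p²-1)(p-1)` if `f = e = d`; `p^(2(e+f)-1)(p-1)` if `f < e = d`;
`p^(3d+e-2)(p-1)²` if `d < f = e`; `p^(3d+f-1)(p-1)` if `d ≤ f < e`; and
`p^(2(d+f)-1)(p-1)` if `f < d < e`. -/
theorem stmt_12 (p d e f : ℕ) (hp : p.Prime) (hodd : Odd p)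
    (hd : 0 < d) (hf : 0 < f) (hde : d ≤ e) (hfe : f ≤ e) (hedf : e ≤ d + f) :
    (f = e ∧ e = d →
      Nat.card (MulAut (M1 p d e f)) = p ^ (4 * e - 3) * (p ^ 2 - 1) * (p - 1)) ∧
    (f < e ∧ e = d →
      Nat.card (MulAut (M1 p d e f)) = p ^ (2 * (e + f) - 1) * (p - 1)) ∧
    (d < f ∧ f = e →
      Nat.card (MulAut (M1 p d e f)) = p ^ (3 * d + e - 2) * (p - 1) ^ 2) ∧
    (d ≤ f ∧ f < e →
      Nat.card (MulAut (M1 p d e f)) = p ^ (3 * d + f - 1) * (p - 1)) ∧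
    (f < d ∧ d < e →
      Nat.card (MulAut (M1 p d e f)) = p ^ (2 * (d + f) - 1) * (p - 1)) := by
  have : Fact p.Prime := ⟨hp⟩
  have : NeZero d := ⟨hd.ne'⟩
  have : NeZero e := ⟨(hd.trans_le hde).ne'⟩
  obtain ⟨τ, hτ⟩ := TwistedProd.exists_isPowChar hodd hf hedf
  obtain ⟨φ⟩ := TwistedProd.nonempty_mulEquiv_M1 hτ
  have hcard := (Nat.card_congr (MulAut.congr φ).toEquiv).trans
    (TwistedProd.natCard_mulAut hτ hodd hf hde)
  have hlt : f < e → Nat.card (MulAut (M1 p d e f)) =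
      p ^ (e - 1 + d + min d f + (d + f - e)) * (p - 1) := fun hfe => by
    rw [hcard, TwistedProd.card_isAutPair_of_lt hτ hodd hf hde hfe hedf]
    ring
  refine ⟨?_, ?_, ?_, ?_, ?_⟩
  · rintro ⟨rfl, rfl⟩
    rw [hcard, TwistedProd.card_isAutPair_of_eq hτ]
    have hsub : p ^ 2 - p = p * (p - 1) := by rw [Nat.mul_sub, mul_one, sq]
    rw [hsub, ← pow_mul, show 4 * f - 3 = (f - 1) * 4 + 1 by lia]
    ring
  · rintro ⟨hfe, rfl⟩
    rw [hlt hfe]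
    congr 2
    lia
  · rintro ⟨hdf, rfl⟩
    rw [hcard, TwistedProd.card_isAutPair_of_lt_of_le hτ hdf le_rfl,
      show 3 * d + f - 2 = f - 1 + (d - 1) + d + d by lia]
    ring
  · rintro ⟨hdf, hfe⟩
    rw [hlt hfe]
    congr 2
    lia
  · rintro ⟨hfd, hde⟩
    rw [hlt (hfd.trans hde)]
    congr 2
    lia
end

section
/- Let p be an odd prime and let d, e, f be positive integers with 1 ≤ f < d < e. Then the order of the automorphism group of M₂(p,d,e,f) equals p^{d+e+2f−1}(p−1). -/
/-- The split metacyclic group of pairs `(y, x)`, standing for `b ^ y * a ^ x`, where `b ^ y`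
conjugates `a` to `a ^ χ y`. -/
@[ext]
structure SplitMetacyclic {m n : ℕ} (χ : AddChar (ZMod n) (ZMod m)) where
  fst : ZMod n
  snd : ZMod m

namespace SplitMetacyclic

variable {m n : ℕ} {χ : AddChar (ZMod n) (ZMod m)}

instance : Mul (SplitMetacyclic χ) := ⟨fun g h => ⟨g.fst + h.fst, g.snd * χ h.fst + h.snd⟩⟩

instance : One (SplitMetacyclic χ) := ⟨⟨0, 0⟩⟩

instance : Inv (SplitMetacyclic χ) := ⟨fun g => ⟨-g.fst, -(g.snd * χ (-g.fst))⟩⟩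

@[simp] lemma mul_fst (g h : SplitMetacyclic χ) : (g * h).fst = g.fst + h.fst := rfl

@[simp] lemma mul_snd (g h : SplitMetacyclic χ) :
    (g * h).snd = g.snd * χ h.fst + h.snd := rfl

@[simp] lemma one_fst : (1 : SplitMetacyclic χ).fst = 0 := rfl

@[simp] lemma one_snd : (1 : SplitMetacyclic χ).snd = 0 := rfl

@[simp] lemma inv_fst (g : SplitMetacyclic χ) : g⁻¹.fst = -g.fst := rfl

@[simp] lemma inv_snd (g : SplitMetacyclic χ) : g⁻¹.snd = -(g.snd * χ (-g.fst)) := rfl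

instance : Group (SplitMetacyclic χ) :=
  Group.ofLeftAxioms
    (fun g h k => by
      ext
      · simp [add_assoc]
      · simp only [mul_fst, mul_snd, AddChar.map_add_eq_mul]; ring)
    (fun g => by ext <;> simp)
    (fun g => by
      ext
      · simp
      · have h : χ (-g.fst) * χ g.fst = 1 := by rw [← AddChar.map_add_eq_mul]; simp
        simp only [mul_snd, inv_snd, one_snd]
        linear_combination -g.snd * h)

lemma pow_fst (g : SplitMetacyclic χ) (k : ℕ) : (g ^ k).fst = k * g.fst := by
  induction k with
  | zero => simp
  | succ k ih => rw [pow_succ, mul_fst, ih]; push_cast; ring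

lemma pow_snd (g : SplitMetacyclic χ) (k : ℕ) :
    (g ^ k).snd = g.snd * ∑ t ∈ Finset.range k, χ g.fst ^ t := by
  induction k with
  | zero => simp
  | succ k ih => rw [pow_succ, mul_snd, ih, geom_sum_succ]; ring

lemma pow_snd_of_eq_one {g : SplitMetacyclic χ} (h : χ g.fst = 1) (k : ℕ) :
    (g ^ k).snd = k * g.snd := by
  simp [pow_snd, h, mul_comm]

variable (χ) in
/-- The generator of the normal factor. -/
def a : SplitMetacyclic χ := ⟨0, 1⟩

variable (χ) in
/-- The generator of the complement. -/
def b : SplitMetacyclic χ := ⟨1, 0⟩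

@[simp] lemma a_fst : (a χ).fst = 0 := rfl

@[simp] lemma a_snd : (a χ).snd = 1 := rfl

@[simp] lemma b_fst : (b χ).fst = 1 := rfl

@[simp] lemma b_snd : (b χ).snd = 0 := rfl

lemma a_pow (k : ℕ) : a χ ^ k = ⟨0, k⟩ := by
  ext <;> simp [pow_fst, pow_snd]

lemma b_pow (k : ℕ) : b χ ^ k = ⟨k, 0⟩ := by
  ext <;> simp [pow_fst, pow_snd]

lemma b_pow_mul_a_pow_val [NeZero m] [NeZero n] (g : SplitMetacyclic χ) :
    b χ ^ g.fst.val * a χ ^ g.snd.val = g := by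
  rw [a_pow, b_pow]
  ext <;> simp

variable {K : Type*} [Group K]

lemma hom_ext [NeZero m] [NeZero n] {φ ψ : SplitMetacyclic χ →* K} (ha : φ (a χ) = ψ (a χ))
    (hb : φ (b χ) = ψ (b χ)) : φ = ψ := by
  ext g
  rw [← b_pow_mul_a_pow_val g]
  simp [ha, hb]

lemma pow_mul_pow_comm {α β : K} {r : ℕ} (h : α * β = β * α ^ r) (x y : ℕ) :
    α ^ x * β ^ y = β ^ y * α ^ (x * r ^ y) := by
  have h₁ (x : ℕ) : α ^ x * β = β * α ^ (x * r) := by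
    have : SemiconjBy β (α ^ r) α := h.symm
    rw [mul_comm, pow_mul]
    exact (this.pow_right x).symm
  induction y with
  | zero => simp
  | succ y ih => rw [pow_succ, ← mul_assoc, ih, mul_assoc, h₁, mul_assoc, pow_succ, mul_assoc]

/-- The universal property of the presentation of a split metacyclic group. -/
def lift [NeZero m] [NeZero n] {r : ℕ} (hχ : χ 1 = r) (α β : K) (hα : α ^ m = 1)
    (hβ : β ^ n = 1) (h : α * β = β * α ^ r) : SplitMetacyclic χ →* K where
  toFun g := β ^ g.fst.val * α ^ g.snd.val
  map_one' := by simp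
  map_mul' g k := by
    have hc : χ k.fst = ((r ^ k.fst.val : ℕ) : ZMod m) := by
      conv_lhs => rw [← ZMod.natCast_zmod_val k.fst, ← nsmul_one, AddChar.map_nsmul_eq_pow, hχ]
      simp
    have hx : α ^ (g * k).snd.val = α ^ (g.snd.val * r ^ k.fst.val + k.snd.val) := by
      have : (g * k).snd = ((g.snd.val * r ^ k.fst.val + k.snd.val : ℕ) : ZMod m) := by
        rw [mul_snd, hc]; simp
      rw [this, ZMod.val_natCast, ← pow_eq_pow_mod _ hα]
    have hy : β ^ (g * k).fst.val = β ^ (g.fst.val + k.fst.val) := by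
      rw [mul_fst, ZMod.val_add, ← pow_eq_pow_mod _ hβ]
    rw [hx, hy, pow_add, pow_add, mul_assoc, mul_assoc, ← mul_assoc (α ^ g.snd.val),
      pow_mul_pow_comm h, mul_assoc]

lemma lift_apply [NeZero m] [NeZero n] {r : ℕ} (hχ : χ 1 = r) (α β : K) (hα : α ^ m = 1)
    (hβ : β ^ n = 1) (h : α * β = β * α ^ r) (g : SplitMetacyclic χ) :
    lift hχ α β hα hβ h g = β ^ g.fst.val * α ^ g.snd.val := rfl

lemma lift_a [NeZero m] [NeZero n] {r : ℕ} (hχ : χ 1 = r) (α β : K) (hα : α ^ m = 1)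
    (hβ : β ^ n = 1) (h : α * β = β * α ^ r) : lift hχ α β hα hβ h (a χ) = α := by
  rw [lift_apply, a_fst, a_snd, ZMod.val_zero, pow_zero, one_mul, ZMod.val_one_eq_one_mod,
    ← pow_eq_pow_mod _ hα, pow_one]

lemma lift_b [NeZero m] [NeZero n] {r : ℕ} (hχ : χ 1 = r) (α β : K) (hα : α ^ m = 1)
    (hβ : β ^ n = 1) (h : α * β = β * α ^ r) : lift hχ α β hα hβ h (b χ) = β := by
  rw [lift_apply, b_fst, b_snd, ZMod.val_zero, pow_zero, mul_one, ZMod.val_one_eq_one_mod,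
    ← pow_eq_pow_mod _ hβ, pow_one]

lemma a_mul_b {r : ℕ} (hχ : χ 1 = r) : a χ * b χ = b χ * a χ ^ r := by
  rw [a_pow]
  ext <;> simp [hχ]

instance [NeZero m] [NeZero n] : Finite (SplitMetacyclic χ) :=
  Finite.of_injective (fun g => (g.fst, g.snd)) fun g h hgh => by
    simp only [Prod.mk.injEq] at hgh
    exact SplitMetacyclic.ext hgh.1 hgh.2

end SplitMetacyclic

namespace M2

lemma of_zero_pow (p d e f : ℕ) : (PresentedGroup.of 0 : M2 p d e f) ^ p ^ d = 1 :=
  PresentedGroup.one_of_mem (x := FreeGroup.of 0 ^ p ^ d) (by simp [M2rels])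

lemma of_one_pow (p d e f : ℕ) : (PresentedGroup.of 1 : M2 p d e f) ^ p ^ e = 1 :=
  PresentedGroup.one_of_mem (x := FreeGroup.of 1 ^ p ^ e) (by simp [M2rels])

lemma of_zero_mul_of_one (p d e f : ℕ) :
    (PresentedGroup.of 0 : M2 p d e f) * PresentedGroup.of 1 =
      PresentedGroup.of 1 * PresentedGroup.of 0 ^ (1 + p ^ f) := by
  have h : (PresentedGroup.of 1 : M2 p d e f)⁻¹ * PresentedGroup.of 0 * PresentedGroup.of 1 *
      (PresentedGroup.of 0 ^ (1 + p ^ f))⁻¹ = 1 :=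
    PresentedGroup.one_of_mem (x := (FreeGroup.of 1)⁻¹ * FreeGroup.of 0 * FreeGroup.of 1 *
      (FreeGroup.of 0 ^ (1 + p ^ f))⁻¹) (by simp [M2rels])
  rw [mul_inv_eq_one, mul_assoc, inv_mul_eq_iff_eq_mul] at h
  exact h

open SplitMetacyclic in
/-- The presented group `M₂(p,d,e,f)` as a split metacyclic group of pairs. -/
noncomputable def equivSplitMetacyclic (p d e f : ℕ) [NeZero p]
    {χ : AddChar (ZMod (p ^ e)) (ZMod (p ^ d))} (hχ : χ 1 = (1 + p ^ f : ℕ)) :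
    M2 p d e f ≃* SplitMetacyclic χ :=
  MonoidHom.toMulEquiv
    (PresentedGroup.toGroup (rels := M2rels p d e f) (f := ![a χ, b χ]) (by
      rintro r (rfl | rfl | rfl)
      · ext <;> simp [a_pow, -Nat.cast_pow]
      · ext <;> simp [b_pow, -Nat.cast_pow]
      · simp only [map_mul, map_inv, map_pow, FreeGroup.lift_apply_of]
        rw [mul_inv_eq_one, mul_assoc, inv_mul_eq_iff_eq_mul]
        exact a_mul_b hχ))
    (lift hχ (PresentedGroup.of 0) (PresentedGroup.of 1) (of_zero_pow p d e f)
      (of_one_pow p d e f) (of_zero_mul_of_one p d e f))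
    (by
      ext x
      fin_cases x
      · simp [lift_a]
      · simp [lift_b])
    (by
      apply hom_ext
      · simp [lift_a]
      · simp [lift_b])

end M2

lemma pow_dvd_one_add_pow_sub_one_iff {p : ℕ} (hp : p.Prime) (hodd : Odd p) {f : ℕ} (hf : 0 < f)
    (k n : ℕ) : (p : ℤ) ^ (f + k) ∣ (1 + (p : ℤ) ^ f) ^ n - 1 ↔ p ^ k ∣ n := by
  have hpf : (p : ℤ) ∣ p ^ f := dvd_pow_self _ hf.ne'
  have h := Int.emultiplicity_pow_sub_pow hp hodd (x := 1 + (p : ℤ) ^ f) (y := 1)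
    (by rwa [add_sub_cancel_left])
    (fun h => by
      have := (Nat.prime_iff_prime_int.mp hp).not_dvd_one
      exact this ((dvd_add_left hpf).mp h)) n
  rw [one_pow, add_sub_cancel_left,
    emultiplicity_pow_self_of_prime (Nat.prime_iff_prime_int.mp hp)] at h
  rw [pow_dvd_iff_le_emultiplicity, pow_dvd_iff_le_emultiplicity, h, Nat.cast_add]
  exact ENat.add_le_add_iff_left (ENat.natCast_ne_top f)

lemma pow_dvd_geom_sum_iff {p : ℕ} (hp : p.Prime) (hodd : Odd p) {f : ℕ} (hf : 0 < f)
    (k n : ℕ) : p ^ k ∣ ∑ t ∈ Finset.range n, (1 + p ^ f) ^ t ↔ p ^ k ∣ n := by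
  rw [← pow_dvd_one_add_pow_sub_one_iff hp hodd hf k n, ← geom_sum_mul, add_sub_cancel_left,
    add_comm f, pow_add, mul_dvd_mul_iff_right (pow_ne_zero _ (by exact_mod_cast hp.ne_zero))]
  exact_mod_cast Iff.rfl

lemma one_add_pow_eq_one_iff {p : ℕ} (hp : p.Prime) (hodd : Odd p) {d f : ℕ} (hf : 0 < f)
    (hfd : f ≤ d) (n : ℕ) : ((1 + p ^ f : ℕ) : ZMod (p ^ d)) ^ n = 1 ↔ p ^ (d - f) ∣ n := by
  rw [← pow_dvd_one_add_pow_sub_one_iff hp hodd hf, Nat.add_sub_cancel' hfd]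
  have := ZMod.intCast_zmod_eq_zero_iff_dvd ((1 + (p : ℤ) ^ f) ^ n - 1) (p ^ d)
  push_cast at this ⊢
  rw [← this, sub_eq_zero]

lemma ZMod.pow_dvd_natCast_iff {p e k : ℕ} (hk : k ≤ e) (n : ℕ) :
    (p : ZMod (p ^ e)) ^ k ∣ (n : ZMod (p ^ e)) ↔ p ^ k ∣ n := by
  refine ⟨fun h => ?_, fun h => by exact_mod_cast Nat.cast_dvd_cast (α := ZMod (p ^ e)) h⟩
  have := map_dvd (ZMod.castHom (pow_dvd_pow p hk) (ZMod (p ^ k))) h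
  rw [map_pow, map_natCast, map_natCast, ← Nat.cast_pow, ZMod.natCast_self, zero_dvd_iff] at this
  exact (ZMod.natCast_eq_zero_iff _ _).mp this

lemma ZMod.pow_mul_eq_zero_iff {p e k : ℕ} [NeZero p] (hk : k ≤ e) (y : ZMod (p ^ e)) :
    (p : ZMod (p ^ e)) ^ k * y = 0 ↔ (p : ZMod (p ^ e)) ^ (e - k) ∣ y := by
  obtain ⟨n, rfl⟩ : ∃ n : ℕ, (n : ZMod (p ^ e)) = y := ⟨y.val, ZMod.natCast_zmod_val y⟩
  rw [ZMod.pow_dvd_natCast_iff (Nat.sub_le e k), ← Nat.cast_pow, ← Nat.cast_mul,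
    ZMod.natCast_eq_zero_iff]
  nth_rw 1 [← Nat.add_sub_cancel' hk]
  rw [pow_add, mul_dvd_mul_iff_left (pow_ne_zero _ (NeZero.ne p))]

lemma ZMod.pow_self_eq_zero (p e : ℕ) : (p : ZMod (p ^ e)) ^ e = 0 := by
  rw [← Nat.cast_pow, ZMod.natCast_self]

lemma ZMod.card_pow_mul_eq_zero {p e k : ℕ} [NeZero p] (hk : k ≤ e) :
    Nat.card {y : ZMod (p ^ e) // (p : ZMod (p ^ e)) ^ k * y = 0} = p ^ k := by
  have h := IsAddCyclic.card_nsmulAddMonoidHom_ker (G := ZMod (p ^ e)) (p ^ k)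
  rw [Nat.card_zmod, Nat.gcd_eq_right (pow_dvd_pow p hk)] at h
  rw [← h]
  refine Nat.card_congr (Equiv.subtypeEquivRight fun y => ?_)
  simp [AddMonoidHom.mem_ker]

namespace SplitMetacyclic

variable {p d e f : ℕ} {χ : AddChar (ZMod (p ^ e)) (ZMod (p ^ d))}

lemma char_natCast (hχ : χ 1 = (1 + p ^ f : ℕ)) (n : ℕ) :
    χ n = ((1 + p ^ f : ℕ) : ZMod (p ^ d)) ^ n := by
  rw [← nsmul_one, AddChar.map_nsmul_eq_pow, hχ]

lemma char_eq_one_iff (hp : p.Prime) (hodd : Odd p) (hf : 0 < f) (hfd : f ≤ d) (hde : d ≤ e)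
    (hχ : χ 1 = (1 + p ^ f : ℕ)) (y : ZMod (p ^ e)) :
    χ y = 1 ↔ (p : ZMod (p ^ e)) ^ (d - f) ∣ y := by
  have : NeZero p := ⟨hp.ne_zero⟩
  obtain ⟨n, rfl⟩ : ∃ n : ℕ, (n : ZMod (p ^ e)) = y := ⟨y.val, ZMod.natCast_zmod_val y⟩
  rw [char_natCast hχ, one_add_pow_eq_one_iff hp hodd hf hfd,
    ZMod.pow_dvd_natCast_iff (by omega)]

lemma char_eq_one_of_pow_mul_eq_zero (hp : p.Prime) (hodd : Odd p) (hf : 0 < f) (hfd : f ≤ d)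
    (hde : d ≤ e) (hχ : χ 1 = (1 + p ^ f : ℕ)) {y : ZMod (p ^ e)}
    (hy : (p : ZMod (p ^ e)) ^ f * y = 0) : χ y = 1 := by
  have : NeZero p := ⟨hp.ne_zero⟩
  rw [ZMod.pow_mul_eq_zero_iff (hfd.trans hde)] at hy
  exact (char_eq_one_iff hp hodd hf hfd hde hχ y).mpr ((pow_dvd_pow _ (by omega)).trans hy)

lemma char_eq_char_one_iff (hp : p.Prime) (hodd : Odd p) (hf : 0 < f) (hfd : f ≤ d)
    (hde : d ≤ e) (hχ : χ 1 = (1 + p ^ f : ℕ)) (y : ZMod (p ^ e)) :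
    χ y = χ 1 ↔ (p : ZMod (p ^ e)) ^ (e - (d - f)) * (y - 1) = 0 := by
  have : NeZero p := ⟨hp.ne_zero⟩
  have h : χ (y - 1) * χ 1 = χ y := by rw [← AddChar.map_add_eq_mul, sub_add_cancel]
  have h₁ : IsUnit (χ 1) := by
    refine IsUnit.of_mul_eq_one (χ (-1)) ?_
    rw [← AddChar.map_add_eq_mul]; simp
  rw [ZMod.pow_mul_eq_zero_iff (Nat.sub_le _ _), Nat.sub_sub_self (by omega),
    ← char_eq_one_iff hp hodd hf hfd hde hχ, ← h, h₁.mul_eq_right]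

variable (f) in
/-- The condition for `a ↦ α`, `b ↦ β` to define an automorphism. -/
def IsAutPair (α β : SplitMetacyclic χ) : Prop :=
  IsUnit α.snd ∧ (p : ZMod (p ^ e)) ^ f * α.fst = 0 ∧ χ β.fst = χ 1

lemma isAutPair_of_mulAut (hp : p.Prime) (hodd : Odd p) (hf : 0 < f) (hfd : f < d)
    (hde : d ≤ e) (hχ : χ 1 = (1 + p ^ f : ℕ)) (φ : MulAut (SplitMetacyclic χ)) :
    IsAutPair f (φ (a χ)) (φ (b χ)) := by
  have : NeZero p := ⟨hp.ne_zero⟩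
  set α := φ (a χ) with hα
  set β := φ (b χ) with hβ
  have hαβ : α * β = β * α ^ (1 + p ^ f) := by
    rw [hα, hβ, ← map_pow, ← map_mul, ← map_mul, a_mul_b hχ]
  have hfst : (p : ZMod (p ^ e)) ^ f * α.fst = 0 := by
    have := congrArg SplitMetacyclic.fst hαβ
    simp only [mul_fst, pow_fst] at this
    push_cast at this
    linear_combination -this
  have hχα : χ α.fst = 1 := char_eq_one_of_pow_mul_eq_zero hp hodd hf hfd.le hde hχ hfst
  have hunit : IsUnit α.snd := by
    rw [← ZMod.natCast_zmod_val α.snd, ZMod.isUnit_natCast_iff_not_dvd_pow hp (by omega)]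
    rintro ⟨c, hc⟩
    have hpow : α ^ p ^ (d - 1) = 1 := by
      ext
      · rw [pow_fst, one_fst, Nat.cast_pow]
        exact pow_mul_eq_zero_of_le (by omega) hfst
      · rw [pow_snd_of_eq_one hχα, ← ZMod.natCast_zmod_val α.snd, hc, ← Nat.cast_mul, one_snd,
          ← mul_assoc, ← pow_succ, Nat.sub_add_cancel (by omega)]
        simp
    rw [hα, ← map_pow, EmbeddingLike.map_eq_one_iff, a_pow] at hpow
    have := congrArg SplitMetacyclic.snd hpow
    rw [one_snd, ZMod.natCast_eq_zero_iff, Nat.pow_dvd_pow_iff_le_right hp.one_lt] at this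
    omega
  refine ⟨hunit, hfst, ?_⟩
  have := congrArg SplitMetacyclic.snd hαβ
  rw [mul_snd, mul_snd, pow_snd_of_eq_one hχα, pow_fst, mul_comm _ α.fst, ← nsmul_eq_mul',
    AddChar.map_nsmul_eq_pow, hχα, one_pow, ← hχ] at this
  exact hunit.mul_left_cancel (by linear_combination this)

lemma eq_one_of_pow_mul_pow_eq_one (hp : p.Prime) (hodd : Odd p) (hf : 0 < f) (hfd : f < d)
    (hde : d < e) (hχ : χ 1 = (1 + p ^ f : ℕ)) {α β : SplitMetacyclic χ}
    (h : IsAutPair f α β) {x y : ℕ} (hxy : β ^ y * α ^ x = 1) : p ^ d ∣ x ∧ p ^ e ∣ y := by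
  have : NeZero p := ⟨hp.ne_zero⟩
  obtain ⟨hunit, hfst, hβ⟩ := h
  have hχα : χ α.fst = 1 := char_eq_one_of_pow_mul_eq_zero hp hodd hf hfd.le hde.le hχ hfst
  obtain ⟨j, hj⟩ := (ZMod.pow_mul_eq_zero_iff (by omega) _).mp hfst
  have hβunit : IsUnit β.fst := by
    rw [char_eq_char_one_iff hp hodd hf hfd.le hde.le hχ,
      ZMod.pow_mul_eq_zero_iff (Nat.sub_le _ _), Nat.sub_sub_self (by omega)] at hβ
    have hnil : IsNilpotent (β.fst - 1) := by
      have hpnil : IsNilpotent (p : ZMod (p ^ e)) := ⟨e, ZMod.pow_self_eq_zero p e⟩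
      obtain ⟨c, hc⟩ := (dvd_pow_self (p : ZMod (p ^ e)) (by omega : d - f ≠ 0)).trans hβ
      rw [hc]
      exact (Commute.all _ _).isNilpotent_mul_right hpnil
    simpa using hnil.isUnit_one_add
  have h₁ : y * β.fst + x * α.fst = 0 := by
    have := congrArg SplitMetacyclic.fst hxy
    rwa [mul_fst, pow_fst, pow_fst] at this
  have h₂ : β.snd * ((∑ t ∈ Finset.range y, (1 + p ^ f) ^ t : ℕ) : ZMod (p ^ d)) +
      x * α.snd = 0 := by
    have := congrArg SplitMetacyclic.snd hxy
    rw [mul_snd, pow_snd, pow_snd_of_eq_one hχα, pow_fst, ← nsmul_eq_mul,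
      AddChar.map_nsmul_eq_pow, hχα, one_pow, hβ, hχ, mul_one] at this
    exact_mod_cast this
  have hy {k : ℕ} (hx : p ^ k ∣ x) {l : ℕ} (hl : l ≤ e) (hlk : l ≤ e - f + k) : p ^ l ∣ y := by
    rw [← ZMod.pow_dvd_natCast_iff hl, ← hβunit.dvd_mul_right, eq_neg_of_add_eq_zero_left h₁,
      dvd_neg, hj, ← mul_assoc]
    obtain ⟨c, rfl⟩ := hx
    refine (pow_dvd_pow _ hlk).trans ⟨c * j, ?_⟩
    push_cast
    ring
  have hx (k : ℕ) (hk : k ≤ d) : p ^ k ∣ x := by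
    induction k with
    | zero => simp
    | succ k ih =>
      have := hy (ih (by omega)) (l := k + 1) (by omega) (by omega)
      rw [← pow_dvd_geom_sum_iff hp hodd hf, ← ZMod.pow_dvd_natCast_iff hk] at this
      rw [← ZMod.pow_dvd_natCast_iff hk, ← hunit.dvd_mul_right, eq_neg_of_add_eq_zero_right h₂,
        dvd_neg]
      exact this.mul_left _
  exact ⟨hx d le_rfl, hy (hx d le_rfl) le_rfl (by omega)⟩

lemma exists_mulAut_of_isAutPair (hp : p.Prime) (hodd : Odd p) (hf : 0 < f) (hfd : f < d)
    (hde : d < e) (hχ : χ 1 = (1 + p ^ f : ℕ)) {α β : SplitMetacyclic χ}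
    (h : IsAutPair f α β) : ∃ φ : MulAut (SplitMetacyclic χ), φ (a χ) = α ∧ φ (b χ) = β := by
  have : NeZero p := ⟨hp.ne_zero⟩
  obtain ⟨hunit, hfst, hβ⟩ := id h
  have hχα : χ α.fst = 1 := char_eq_one_of_pow_mul_eq_zero hp hodd hf hfd.le hde.le hχ hfst
  have hα_pow : α ^ p ^ d = 1 := by
    ext
    · rw [pow_fst, one_fst, Nat.cast_pow]
      exact pow_mul_eq_zero_of_le hfd.le hfst
    · rw [pow_snd_of_eq_one hχα, ZMod.natCast_self, zero_mul, one_snd]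
  have hβ_pow : β ^ p ^ e = 1 := by
    ext
    · rw [pow_fst, ZMod.natCast_self, zero_mul, one_fst]
    · have hsum := (ZMod.natCast_eq_zero_iff _ _).mpr
        ((pow_dvd_geom_sum_iff hp hodd hf d (p ^ e)).mpr (pow_dvd_pow p hde.le))
      push_cast at hsum
      rw [pow_snd, hβ, hχ, one_snd]
      push_cast
      rw [hsum, mul_zero]
  have hαβ : α * β = β * α ^ (1 + p ^ f) := by
    ext
    · simp only [mul_fst, pow_fst]
      push_cast
      linear_combination -hfst
    · rw [mul_snd, mul_snd, pow_snd_of_eq_one hχα, pow_fst, ← nsmul_eq_mul,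
        AddChar.map_nsmul_eq_pow, hχα, one_pow, ← hχ, hβ]
      ring
  have hinj : Function.Injective (lift hχ α β hα_pow hβ_pow hαβ) := by
    rw [injective_iff_map_eq_one]
    intro g hg
    obtain ⟨hx, hy⟩ := eq_one_of_pow_mul_pow_eq_one hp hodd hf hfd hde hχ h hg
    ext
    · rwa [← ZMod.natCast_eq_zero_iff, ZMod.natCast_zmod_val] at hy
    · rwa [← ZMod.natCast_eq_zero_iff, ZMod.natCast_zmod_val] at hx
  exact ⟨MulEquiv.ofBijective _ (Finite.injective_iff_bijective.mp hinj),
    lift_a hχ α β hα_pow hβ_pow hαβ, lift_b hχ α β hα_pow hβ_pow hαβ⟩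

lemma card_mulAut_eq_card_isAutPair (hp : p.Prime) (hodd : Odd p) (hf : 0 < f) (hfd : f < d)
    (hde : d < e) (hχ : χ 1 = (1 + p ^ f : ℕ)) :
    Nat.card (MulAut (SplitMetacyclic χ)) =
      Nat.card {q : SplitMetacyclic χ × SplitMetacyclic χ // IsAutPair f q.1 q.2} := by
  have : NeZero p := ⟨hp.ne_zero⟩
  refine Nat.card_eq_of_bijective
    (fun φ => ⟨(φ (a χ), φ (b χ)), isAutPair_of_mulAut hp hodd hf hfd hde.le hχ φ⟩)
    ⟨fun φ ψ h => ?_, fun ⟨⟨α, β⟩, h⟩ => ?_⟩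
  · simp only [Subtype.mk.injEq, Prod.mk.injEq] at h
    exact MulEquiv.toMonoidHom_injective (hom_ext h.1 h.2)
  · obtain ⟨φ, rfl, rfl⟩ := exists_mulAut_of_isAutPair hp hodd hf hfd hde hχ h
    exact ⟨φ, rfl⟩

/-- The coordinates of a pair satisfying `IsAutPair` vary independently. -/
noncomputable def isAutPairEquiv :
    {q : SplitMetacyclic χ × SplitMetacyclic χ // IsAutPair f q.1 q.2} ≃
      ((ZMod (p ^ d))ˣ × {y : ZMod (p ^ e) // (p : ZMod (p ^ e)) ^ f * y = 0}) ×
        (ZMod (p ^ d) × {y : ZMod (p ^ e) // χ y = χ 1}) where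
  toFun q := ((q.2.1.unit, ⟨q.1.1.fst, q.2.2.1⟩), (q.1.2.snd, ⟨q.1.2.fst, q.2.2.2⟩))
  invFun t := ⟨(⟨t.1.2, t.1.1⟩, ⟨t.2.2, t.2.1⟩), t.1.1.isUnit, t.1.2.2, t.2.2.2⟩
  left_inv _ := rfl
  right_inv t := by
    ext <;> rfl

lemma card_char_eq_char_one (hp : p.Prime) (hodd : Odd p) (hf : 0 < f) (hfd : f ≤ d)
    (hde : d ≤ e) (hχ : χ 1 = (1 + p ^ f : ℕ)) :
    Nat.card {y : ZMod (p ^ e) // χ y = χ 1} = p ^ (e - (d - f)) := by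
  have : NeZero p := ⟨hp.ne_zero⟩
  rw [← ZMod.card_pow_mul_eq_zero (p := p) (Nat.sub_le e (d - f))]
  exact Nat.card_congr <| (Equiv.subRight 1).subtypeEquiv fun y =>
    char_eq_char_one_iff hp hodd hf hfd hde hχ y

lemma card_mulAut (hp : p.Prime) (hodd : Odd p) (hf : 0 < f) (hfd : f < d) (hde : d < e)
    (hχ : χ 1 = (1 + p ^ f : ℕ)) :
    Nat.card (MulAut (SplitMetacyclic χ)) = p ^ (d + e + 2 * f - 1) * (p - 1) := by
  have : NeZero p := ⟨hp.ne_zero⟩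
  rw [card_mulAut_eq_card_isAutPair hp hodd hf hfd hde hχ, Nat.card_congr isAutPairEquiv,
    Nat.card_prod, Nat.card_prod, Nat.card_prod, ZMod.card_pow_mul_eq_zero (by omega),
    card_char_eq_char_one hp hodd hf hfd.le hde.le hχ, Nat.card_zmod, Nat.card_eq_fintype_card,
    ZMod.card_units_eq_totient, Nat.totient_prime_pow hp (by omega)]
  rw [show d + e + 2 * f - 1 = (d - 1) + f + (d + (e - (d - f))) by omega, pow_add _ (d - 1 + f),
    pow_add _ (d - 1), pow_add _ d]
  ring

end SplitMetacyclic

/-- For `1 ≤ f < d < e`, the order of `Aut(M₂(p,d,e,f))` equals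
`p^(d+e+2f-1)(p-1)`. -/
theorem stmt_14 (p d e f : ℕ) (hp : p.Prime) (hodd : Odd p)
    (hf : 0 < f) (hfd : f < d) (hde : d < e) :
    Nat.card (MulAut (M2 p d e f)) = p ^ (d + e + 2 * f - 1) * (p - 1) := by
  have : NeZero p := ⟨hp.ne_zero⟩
  have hpow : ((1 + p ^ f : ℕ) : ZMod (p ^ d)) ^ p ^ e = 1 :=
    (one_add_pow_eq_one_iff hp hodd hf hfd.le _).mpr (pow_dvd_pow p (by omega))
  have hχ : AddChar.zmodChar (p ^ e) hpow 1 = (1 + p ^ f : ℕ) := by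
    simpa using AddChar.zmodChar_apply' hpow 1
  rw [Nat.card_congr (MulAut.congr (M2.equivSplitMetacyclic p d e f hχ)).toEquiv]
  exact SplitMetacyclic.card_mulAut hp hodd hf hfd hde hχ
end

section
/- Let p be an odd prime, let d, e, h, f be positive integers with h − d ≤ f < d < h < e, and let G = M₃(p,d,e,h,f) with canonical generators a, b. For integers r, t (taken modulo p^{d+e−h}) and s, u (taken modulo p^h), the assignment a ↦ bʳaˢ, b ↦ bᵗaᵘ extends to an automorphism of G if and only if r ≡ 0 (mod p^{d+e−h−f}), s ≡ 1 + u·p^{e−h} (mod p^{h−d}), t ≡ 1 (mod p^{d−f}), and r ≡ (t−1)·p^{e−h} (mod p^{e−f}). -/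
/-! ### Geometric sums modulo prime powers -/

section GeomSum

open Finset

lemma geom_sum_mul_exponent (x : ℤ) (m n : ℕ) :
    ∑ i ∈ range (m * n), x ^ i = (∑ i ∈ range m, x ^ i) * ∑ i ∈ range n, (x ^ m) ^ i := by
  induction n with
  | zero => simp
  | succ n ih =>
    rw [Nat.mul_succ, sum_range_add, ih, sum_range_succ, mul_add, ← pow_mul]
    congr 1
    rw [sum_mul]
    exact sum_congr rfl fun i _ => by rw [pow_add, mul_comm]

lemma dvd_pow_sub_one_of_dvd_sub_one {q x : ℤ} (h : q ∣ x - 1) (n : ℕ) : q ∣ x ^ n - 1 := by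
  simpa using h.trans (sub_dvd_pow_sub_pow x 1 n)

lemma dvd_geom_sum_sub_of_dvd_sub_one {q x : ℤ} (h : q ∣ x - 1) (n : ℕ) :
    q ∣ ∑ i ∈ range n, x ^ i - n := by
  have : ∑ i ∈ range n, x ^ i - (n : ℤ) = ∑ i ∈ range n, (x ^ i - 1) := by
    simp [sum_sub_distrib]
  rw [this]
  exact dvd_sum fun i _ => dvd_pow_sub_one_of_dvd_sub_one h i

/-- A sum of an odd number `p` of powers of `x ≡ 1 (mod q)` is `p` modulo `q * p` if `p ∣ q`. -/
lemma geom_sum_odd_modulus {p : ℕ} (hodd : Odd p) {q x : ℤ} (hpq : (p : ℤ) ∣ q)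
    (hx : q ∣ x - 1) : q * p ∣ ∑ i ∈ range p, x ^ i - p := by
  obtain ⟨y, hy⟩ := hx
  have key : ∀ n : ℕ, q * p ∣ 2 * (∑ i ∈ range n, x ^ i - n) - q * y * (n * (n - 1)) := by
    intro n
    induction n with
    | zero => simp
    | succ n ih =>
      have h1 : q * p ∣ x ^ n - 1 - n * (q * y) := by
        obtain ⟨z, hz⟩ := dvd_geom_sum_sub_of_dvd_sub_one (Dvd.intro y hy.symm) n
        have h2 : x ^ n - 1 - n * (q * y) = q * q * (y * z) := by
          have := mul_geom_sum x n
          rw [← this, hy]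
          linear_combination (q * y) * hz
        rw [h2]
        exact (mul_dvd_mul_left q hpq).mul_right _
      rw [sum_range_succ]
      have h2 : 2 * (∑ i ∈ range n, x ^ i + x ^ n - ((n + 1 : ℕ) : ℤ)) -
            q * y * ((n + 1 : ℕ) * ((n + 1 : ℕ) - 1)) =
          2 * (∑ i ∈ range n, x ^ i - n) - q * y * (n * (n - 1)) +
            2 * (x ^ n - 1 - n * (q * y)) := by
        push_cast
        ring
      rw [h2]
      exact ih.add (h1.mul_left 2)
  have h2 : q * p ∣ 2 * (∑ i ∈ range p, x ^ i - p) := by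
    obtain ⟨j, hj⟩ := hodd
    have h3 := key p
    rw [dvd_sub_left] at h3
    · exact h3
    · refine ⟨y * j * 2, ?_⟩
      have : (p : ℤ) = 2 * j + 1 := by exact_mod_cast hj
      rw [this]; ring
  obtain ⟨z, hz⟩ := dvd_geom_sum_sub_of_dvd_sub_one (Dvd.intro y hy.symm) p
  obtain ⟨j, hj⟩ := hodd
  have hj' : (p : ℤ) = 2 * j + 1 := by exact_mod_cast hj
  have h4 : ∑ i ∈ range p, x ^ i - (p : ℤ) =
      q * p * z - j * (2 * (∑ i ∈ range p, x ^ i - (p : ℤ))) := by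
    linear_combination (p : ℤ) * hz - (∑ i ∈ range p, x ^ i - (p : ℤ)) * hj'
  rw [h4]
  exact (Dvd.intro z rfl).sub (h2.mul_left _)

lemma geom_sum_prime_pow_modulus {p : ℕ} (hodd : Odd p) {g : ℕ} (hg : 0 < g) {x : ℤ}
    (hx : (p : ℤ) ^ g ∣ x - 1) (v : ℕ) :
    (p : ℤ) ^ (v + g) ∣ ∑ i ∈ range (p ^ v), x ^ i - (p : ℤ) ^ v := by
  induction v with
  | zero => simp
  | succ v ih =>
    rw [pow_succ p v, geom_sum_mul_exponent]
    obtain ⟨y, hy⟩ := ih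
    obtain ⟨z, hz⟩ := geom_sum_odd_modulus hodd (dvd_pow_self (p : ℤ) hg.ne')
      (dvd_pow_sub_one_of_dvd_sub_one hx (p ^ v))
    refine ⟨y * (1 + (p : ℤ) ^ g * z) + z, ?_⟩
    rw [sub_eq_iff_eq_add] at hy hz
    rw [hy, hz]
    ring

/-- If `x ≡ 1 (mod p ^ g)` and `p ^ v ∣ n`, then `1 + x + ⋯ + x ^ (n - 1) ≡ n (mod p ^ (v + g))`. -/
lemma geom_sum_modulus {p : ℕ} (hodd : Odd p) {g : ℕ} (hg : 0 < g) {x : ℤ}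
    (hx : (p : ℤ) ^ g ∣ x - 1) {v n : ℕ} (hn : p ^ v ∣ n) :
    (p : ℤ) ^ (v + g) ∣ ∑ i ∈ range n, x ^ i - n := by
  obtain ⟨k, rfl⟩ := hn
  rw [geom_sum_mul_exponent]
  obtain ⟨y, hy⟩ := geom_sum_prime_pow_modulus hodd hg hx v
  obtain ⟨z, hz⟩ := dvd_geom_sum_sub_of_dvd_sub_one (dvd_pow_sub_one_of_dvd_sub_one hx (p ^ v)) k
  rw [sub_eq_iff_eq_add] at hy hz
  refine ⟨y * (p ^ g * z + k) + z, ?_⟩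
  rw [hy, hz]
  push_cast
  ring

lemma dvd_of_dvd_geom_sum {p : ℕ} (hodd : Odd p) {g : ℕ} (hg : 0 < g) {x : ℤ}
    (hx : (p : ℤ) ^ g ∣ x - 1) {n : ℕ} (v : ℕ)
    (h : (p : ℤ) ^ v ∣ ∑ i ∈ range n, x ^ i) : p ^ v ∣ n := by
  induction v with
  | zero => simp
  | succ v ih =>
    have h1 := geom_sum_modulus hodd hg hx (ih ((pow_dvd_pow _ (Nat.le_succ v)).trans h))
    have h2 := (dvd_sub_right h).1 ((pow_dvd_pow (p : ℤ) (by omega : v + 1 ≤ v + g)).trans h1)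
    exact_mod_cast h2

end GeomSum

/-! ### Arithmetic of the exponents -/

lemma one_add_pow_pow_sub_one (p f n : ℕ) :
    ((1 : ℤ) + p ^ f) ^ n - 1 = p ^ f * ∑ i ∈ Finset.range n, ((1 : ℤ) + p ^ f) ^ i := by
  rw [← mul_geom_sum]
  ring

lemma one_add_pow_pow_modulus {p : ℕ} (hodd : Odd p) {f : ℕ} (hf : 0 < f) {v n : ℕ}
    (hn : p ^ v ∣ n) :
    (p : ℤ) ^ (v + f + f) ∣ ((1 : ℤ) + p ^ f) ^ n - 1 - p ^ f * n := by
  obtain ⟨y, hy⟩ := geom_sum_modulus hodd hf (x := 1 + (p : ℤ) ^ f) (by simp) hn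
  refine ⟨y, ?_⟩
  rw [one_add_pow_pow_sub_one]
  linear_combination (p : ℤ) ^ f * hy

lemma pow_dvd_one_add_pow_pow_sub_one {p : ℕ} (hodd : Odd p) {f : ℕ} (hf : 0 < f) {v r : ℕ}
    (hr : p ^ v ∣ r) :
    (p : ℤ) ^ (v + f) ∣ (1 + (p : ℤ) ^ f) ^ r - 1 := by
  obtain ⟨y, hy⟩ := one_add_pow_pow_modulus hodd hf hr
  obtain ⟨k, rfl⟩ := hr
  refine ⟨k + p ^ f * y, ?_⟩
  push_cast at hy
  linear_combination hy

lemma pow_dvd_conjugation_iff {p : ℕ} (hp : p.Prime) (hodd : Odd p) {f δ d α : ℕ} (hf : 0 < f)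
    (hδ : δ ≤ f) (hd : d = f + α) (s k w : ℤ) (t : ℕ) (m : ℤ)
    (ht : (t : ℤ) = p ^ α * m) :
    (p : ℤ) ^ (d + δ) ∣ s * (1 + p ^ f) * ((1 + p ^ f) ^ t - 1) - k * p ^ d * w ↔
      (p : ℤ) ^ δ ∣ s * m - k * w := by
  have hp0 : (p : ℤ) ≠ 0 := by exact_mod_cast hp.ne_zero
  have htd : p ^ α ∣ t := by
    have : (p : ℤ) ^ α ∣ t := ⟨m, ht⟩
    exact_mod_cast this
  obtain ⟨y, hy⟩ := one_add_pow_pow_modulus hodd hf htd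
  obtain ⟨z, hz⟩ := pow_dvd_pow (p : ℤ) hδ
  have h1 : s * (1 + (p : ℤ) ^ f) * ((1 + p ^ f) ^ t - 1) - k * p ^ d * w =
      p ^ d * (s * (1 + p ^ f) * (m + p ^ f * y) - k * w) := by
    rw [sub_eq_iff_eq_add] at hy
    rw [hy, ht, hd]
    ring
  rw [h1, pow_add, mul_dvd_mul_iff_left (pow_ne_zero _ hp0)]
  apply dvd_iff_dvd_of_dvd_sub
  refine ⟨s * z * (m + (1 + p ^ f) * y), ?_⟩
  linear_combination s * (m + (1 + p ^ f) * y) * hz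

/-- The numerical conditions coming from the conjugation and the power relation are equivalent
to the congruences describing the automorphisms. -/
lemma exponent_conditions_iff {p : ℕ} (hp : p.Prime) (hodd : Odd p) {f δ d α β : ℕ} (hf : 0 < f)
    (hδ : δ ≤ f) (hd : d = f + α) (hα : 0 < α) (hβ : 0 < β)
    (s k u : ℤ) (t : ℕ) :
    ((p : ℤ) ^ (d + δ) ∣ s * (1 + p ^ f) * ((1 + p ^ f) ^ t - 1) - k * p ^ d * (1 + u * p ^ β) ∧
      (p : ℤ) ^ δ ∣ u * p ^ β - s + (t + 1 - p ^ α * k) ∧ ¬ (p : ℤ) ∣ s) ↔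
    ((p : ℤ) ^ δ ∣ s - (1 + u * p ^ β) ∧ (p : ℤ) ^ α ∣ t ∧
      (p : ℤ) ^ (α + β + δ) ∣ p ^ (α + β) * k - t * p ^ β) ∧ ¬ (p : ℤ) ∣ s := by
  have hp0 : (p : ℤ) ≠ 0 := by exact_mod_cast hp.ne_zero
  have hpp : Prime (p : ℤ) := Nat.prime_iff_prime_int.1 hp
  have hpα : (p : ℤ) ∣ p ^ α := dvd_pow_self _ hα.ne'
  have hpβ : (p : ℤ) ∣ p ^ β := dvd_pow_self _ hβ.ne'
  have hpf : (p : ℤ) ∣ p ^ f := dvd_pow_self _ hf.ne'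
  have hunit : ∀ x : ℤ, (p : ℤ) ∣ x - 1 → ¬ (p : ℤ) ∣ x := fun x h1 h2 =>
    hpp.not_isUnit (isUnit_of_dvd_one ((dvd_sub_right h2).1 h1))
  have hred : ∀ m : ℤ, (t : ℤ) = p ^ α * m →
      ((p : ℤ) ^ (α + β + δ) ∣ p ^ (α + β) * k - t * p ^ β ↔ (p : ℤ) ^ δ ∣ k - m) := by
    intro m hm
    rw [hm, show (p : ℤ) ^ (α + β) * k - p ^ α * m * p ^ β = p ^ (α + β) * (k - m) by ring,
      pow_add _ (α + β), mul_dvd_mul_iff_left (pow_ne_zero _ hp0)]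
  constructor
  · rintro ⟨hA, hB, hs⟩
    have hdvd : (p : ℤ) ^ α ∣ t := by
      have h1 : (p : ℤ) ^ d ∣ s * (1 + p ^ f) * ((1 + p ^ f) ^ t - 1) := by
        have := (pow_dvd_pow (p : ℤ) (Nat.le_add_right d δ)).trans hA
        exact (dvd_sub_left (Dvd.intro (k * (1 + u * p ^ β)) (by ring))).1 this
      rw [one_add_pow_pow_sub_one, hd, pow_add, mul_left_comm,
        mul_dvd_mul_iff_left (pow_ne_zero _ hp0)] at h1
      have hcop : IsCoprime ((p : ℤ) ^ α) (s * (1 + p ^ f)) := by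
        refine IsCoprime.pow_left ((hpp.irreducible.coprime_iff_not_dvd).2 fun h => ?_)
        rcases hpp.dvd_or_dvd h with h | h
        · exact hs h
        · exact hunit _ (by simpa using hpf) h
      have h2 := dvd_of_dvd_geom_sum hodd hf (by simp) α (hcop.dvd_of_dvd_mul_left h1)
      exact_mod_cast h2
    obtain ⟨m, hm⟩ := hdvd
    rw [pow_dvd_conjugation_iff hp hodd hf hδ hd _ _ _ t m hm] at hA
    rw [hred m hm]
    have hkm : (p : ℤ) ^ δ ∣ k - m := by
      have h3 : (p : ℤ) ^ δ ∣ (1 + u * p ^ β + p ^ α * m) * (k - m) := by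
        obtain ⟨y, hy⟩ := hA
        obtain ⟨z, hz⟩ := hB
        refine ⟨-y - m * z, ?_⟩
        rw [hm] at hz
        linear_combination -hy - m * hz
      refine IsCoprime.dvd_of_dvd_mul_left (IsCoprime.pow_left
        ((hpp.irreducible.coprime_iff_not_dvd).2 (hunit _ ?_))) h3
      rw [show 1 + u * (p : ℤ) ^ β + p ^ α * m - 1 = u * p ^ β + p ^ α * m by ring]
      exact (hpβ.mul_left _).add (hpα.mul_right _)
    refine ⟨⟨?_, ⟨m, hm⟩, hkm⟩, hs⟩
    obtain ⟨y, hy⟩ := hkm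
    obtain ⟨z, hz⟩ := hB
    refine ⟨-z - p ^ α * y, ?_⟩
    rw [hm] at hz
    linear_combination -hz - (p : ℤ) ^ α * hy
  · rintro ⟨⟨hs1, ⟨m, hm⟩, hkm⟩, hs⟩
    rw [hred m hm] at hkm
    rw [pow_dvd_conjugation_iff hp hodd hf hδ hd _ _ _ t m hm]
    obtain ⟨y, hy⟩ := hkm
    obtain ⟨z, hz⟩ := hs1
    refine ⟨⟨m * z - (1 + u * p ^ β) * y, ?_⟩, ⟨-z - p ^ α * y, ?_⟩, hs⟩
    · linear_combination m * hz - (1 + u * p ^ β) * hy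
    · rw [hm]
      linear_combination -hz - (p : ℤ) ^ α * hy

/-! ### Words in two generators `a`, `b` with `a * b = b * a ^ c` -/

section Words

variable {G : Type*} [Group G] {a b : G} {c : ℤ}

lemma zpow_mul_pow_of_mul_eq (hab : a * b = b * a ^ c) (j : ℤ) (k : ℕ) :
    a ^ j * b ^ k = b ^ k * a ^ (j * c ^ k) := by
  induction k with
  | zero => simp
  | succ k ih =>
    have h : SemiconjBy b (a ^ c) a := hab.symm
    have h2 := h.zpow_right (j * c ^ k)
    rw [← zpow_mul] at h2
    rw [pow_succ, ← mul_assoc, ih, mul_assoc, ← h2.eq, ← mul_assoc, pow_succ c]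
    ring_nf

lemma word_mul_word (hab : a * b = b * a ^ c) (i k : ℕ) (j l : ℤ) :
    (b ^ i * a ^ j) * (b ^ k * a ^ l) = b ^ (i + k) * a ^ (j * c ^ k + l) := by
  rw [mul_assoc, ← mul_assoc (a ^ j), zpow_mul_pow_of_mul_eq hab, pow_add, zpow_add]
  simp only [mul_assoc]

lemma word_pow (hab : a * b = b * a ^ c) (t n : ℕ) (u : ℤ) :
    (b ^ t * a ^ u) ^ n = b ^ (t * n) * a ^ (u * ∑ i ∈ Finset.range n, (c ^ t) ^ i) := by
  induction n with
  | zero => simp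
  | succ n ih =>
    rw [pow_succ, ih, word_mul_word hab, geom_sum_succ]
    ring_nf

end Words

/-! ### The group `M₃` -/

section M3

lemma M3a_pow (p d e h f : ℕ) : M3a p d e h f ^ p ^ h = 1 := by
  have : PresentedGroup.mk (M3rels p d e h f) (FreeGroup.of 0 ^ p ^ h) = 1 :=
    PresentedGroup.one_of_mem (by simp [M3rels])
  rwa [map_pow] at this

lemma M3b_pow (p d e h f : ℕ) : M3b p d e h f ^ p ^ (d + e - h) = M3a p d e h f ^ p ^ d := by
  have : PresentedGroup.mk (M3rels p d e h f)
      (FreeGroup.of 1 ^ p ^ (d + e - h) * (FreeGroup.of 0 ^ p ^ d)⁻¹) = 1 :=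
    PresentedGroup.one_of_mem (by simp [M3rels])
  rwa [map_mul, map_inv, mul_inv_eq_one, map_pow, map_pow] at this

lemma M3a_mul_M3b (p d e h f : ℕ) :
    M3a p d e h f * M3b p d e h f = M3b p d e h f * M3a p d e h f ^ ((1 : ℤ) + p ^ f) := by
  have : PresentedGroup.mk (M3rels p d e h f)
      ((FreeGroup.of 1)⁻¹ * FreeGroup.of 0 * FreeGroup.of 1 *
        (FreeGroup.of 0 ^ (1 + p ^ f))⁻¹) = 1 :=
    PresentedGroup.one_of_mem (by simp [M3rels])
  rw [map_mul, map_inv, mul_inv_eq_one, map_mul, map_mul, map_inv, mul_assoc,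
    inv_mul_eq_iff_eq_mul, map_pow] at this
  have h2 : ((1 : ℤ) + p ^ f) = ((1 + p ^ f : ℕ) : ℤ) := by push_cast; rfl
  rw [h2, zpow_natCast]
  exact this

/-- The universal property of `M₃`. -/
lemma M3.exists_hom {p d e h f : ℕ} {G : Type*} [Group G] (x y : G) (hx : x ^ p ^ h = 1)
    (hy : y ^ p ^ (d + e - h) = x ^ p ^ d) (hxy : x * y = y * x ^ (1 + p ^ f)) :
    ∃ ψ : M3 p d e h f →* G, ψ (M3a p d e h f) = x ∧ ψ (M3b p d e h f) = y := by
  have hrel : ∀ r ∈ M3rels p d e h f, FreeGroup.lift ![x, y] r = 1 := by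
    intro r hr
    simp only [M3rels, Set.mem_insert_iff, Set.mem_singleton_iff] at hr
    rcases hr with rfl | rfl | rfl
    · simpa using hx
    · simpa [mul_inv_eq_one] using hy
    · rw [map_mul, map_inv, mul_inv_eq_one, map_mul, map_mul, map_inv, mul_assoc,
        inv_mul_eq_iff_eq_mul]
      simpa using hxy
  exact ⟨PresentedGroup.toGroup hrel, by simp [M3a], by simp [M3b]⟩

lemma M3b_pow_pow {p d e h f : ℕ} (hdh : d ≤ h) (hhe : h ≤ e) : M3b p d e h f ^ p ^ e = 1 := by
  rw [show e = (d + e - h) + (h - d) by omega, pow_add, pow_mul]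
  rw [show (d + e - h) + (h - d) = e by omega, M3b_pow, ← pow_mul, ← pow_add,
    show d + (h - d) = h by omega, M3a_pow]

/-- `M₃` acts on `ℤ/pᵉ` by affine maps, `a` acting as the translation by `p ^ (e - h)`; hence `a`
has order `p ^ h`. -/
lemma M3a_zpow_eq_one_iff {p d e h f : ℕ} (hp : p.Prime) (hodd : Odd p) (hf : 0 < f)
    (hhd : h - d ≤ f) (hdh : d < h) (hhe : h < e) (j : ℤ) :
    M3a p d e h f ^ j = 1 ↔ (p : ℤ) ^ h ∣ j := by
  have hp0 : (p : ℤ) ≠ 0 := by exact_mod_cast hp.ne_zero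
  constructor
  · intro hj
    have hcop : Nat.Coprime (1 + p ^ f) (p ^ e) := by
      apply Nat.Coprime.pow_right
      rw [Nat.coprime_comm, hp.coprime_iff_not_dvd, ← Nat.dvd_add_iff_left (dvd_pow_self p hf.ne')]
      exact hp.one_lt.ne' ∘ Nat.dvd_one.1
    let A : Equiv.Perm (ZMod (p ^ e)) := Equiv.addRight ((p : ZMod (p ^ e)) ^ (e - h))
    let B : Equiv.Perm (ZMod (p ^ e)) :=
      (Units.mulLeft (ZMod.unitOfCoprime _ hcop)).trans (Equiv.subRight 1)
    have hB1 : ∀ x, B x = (1 + (p : ZMod (p ^ e)) ^ f) * x - 1 := by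
      intro x
      simp [B]
    have hA : ∀ (n : ℕ) x, (A ^ n) x = x + n * (p : ZMod (p ^ e)) ^ (e - h) := by
      intro n x
      simp [A]
    have hB : ∀ (n : ℕ) x, (B ^ n) x = (1 + (p : ZMod (p ^ e)) ^ f) ^ n * x -
        ∑ i ∈ Finset.range n, (1 + (p : ZMod (p ^ e)) ^ f) ^ i := by
      intro n
      induction n with
      | zero => simp
      | succ n ih =>
        intro x
        rw [pow_succ', Equiv.Perm.mul_apply, ih, hB1, geom_sum_succ]
        ring
    have hzero : ∀ z : ℤ, (p : ℤ) ^ e ∣ z → (z : ZMod (p ^ e)) = 0 := by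
      intro z hz
      rw [ZMod.intCast_zmod_eq_zero_iff_dvd]
      exact_mod_cast hz
    have hpow : ∀ n, e ≤ n → (p : ZMod (p ^ e)) ^ n = 0 := by
      intro n hn
      have := hzero ((p : ℤ) ^ n) (pow_dvd_pow _ hn)
      exact_mod_cast this
    have hAh : A ^ p ^ h = 1 := by
      ext1 x
      rw [hA]
      push_cast
      rw [← pow_add, hpow _ (by omega)]
      simp
    have hBN : B ^ p ^ (d + e - h) * A ^ p ^ d = 1 := by
      ext1 x
      have h1 := geom_sum_modulus hodd hf (x := 1 + (p : ℤ) ^ f) (by simp)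
        (dvd_refl (p ^ (d + e - h)))
      have h1' := hzero _ ((pow_dvd_pow (p : ℤ) (by omega : e ≤ d + e - h + f)).trans h1)
      have h2 := one_add_pow_pow_sub_one p f (p ^ (d + e - h))
      have h2' := congrArg (Int.cast : ℤ → ZMod (p ^ e)) h2
      push_cast at h1' h2'
      rw [sub_eq_zero] at h1'
      rw [h1', ← pow_add, hpow (f + (d + e - h)) (by omega), sub_eq_zero] at h2'
      rw [Equiv.Perm.mul_apply, hA, hB, h1', h2']
      push_cast
      rw [← pow_add, show d + (e - h) = d + e - h by omega]
      simp
    have hBA : B * A = A ^ (1 + p ^ f) * B := by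
      ext1 x
      have := hA 1 x
      rw [pow_one] at this
      rw [Equiv.Perm.mul_apply, Equiv.Perm.mul_apply, hA, hB1, hB1, this]
      push_cast
      ring
    obtain ⟨ψ, hψ, -⟩ := M3.exists_hom (d := d) (e := e) (f := f) A B⁻¹ hAh
      (by rw [inv_pow, inv_eq_iff_mul_eq_one, hBN])
      (by rw [eq_inv_mul_iff_mul_eq, ← mul_assoc, hBA, mul_inv_cancel_right])
    have hAj : A ^ j = 1 := by rw [← hψ, ← map_zpow, hj, map_one]
    have hAz : (A ^ j) 0 = j * (p : ZMod (p ^ e)) ^ (e - h) := by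
      simp [A]
    rw [hAj] at hAz
    have h3 : ((j * (p : ℤ) ^ (e - h) : ℤ) : ZMod (p ^ e)) = 0 := by
      push_cast
      rw [← hAz]
      rfl
    rw [ZMod.intCast_zmod_eq_zero_iff_dvd] at h3
    push_cast at h3
    rw [show e = h + (e - h) by omega, pow_add, show h + (e - h) - h = e - h by omega] at h3
    exact (mul_dvd_mul_iff_right (pow_ne_zero _ hp0)).1 h3
  · rintro ⟨k, rfl⟩
    have := M3a_pow p d e h f
    rw [zpow_mul, show ((p : ℤ) ^ h) = ((p ^ h : ℕ) : ℤ) by push_cast; rfl, zpow_natCast, this,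
      one_zpow]

lemma M3_word_eq_one_iff {p d e h f : ℕ} (hp : p.Prime) (hodd : Odd p) (hf : 0 < f)
    (hhd : h - d ≤ f) (hdh : d < h) (hhe : h < e) (i j : ℤ) :
    M3b p d e h f ^ i * M3a p d e h f ^ j = 1 ↔
      ∃ l : ℤ, i = (p : ℤ) ^ (d + e - h) * l ∧ (p : ℤ) ^ h ∣ j + p ^ d * l := by
  have hb : ∀ l : ℤ, M3b p d e h f ^ ((p : ℤ) ^ (d + e - h) * l) =
      M3a p d e h f ^ ((p : ℤ) ^ d * l) := by
    intro l
    rw [zpow_mul, zpow_mul]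
    congr 1
    exact_mod_cast M3b_pow p d e h f
  constructor
  · intro hij
    obtain ⟨χ, hχa, hχb⟩ := M3.exists_hom (p := p) (d := d) (e := e) (h := h) (f := f)
      (1 : Multiplicative (ZMod (p ^ (d + e - h)))) (Multiplicative.ofAdd 1) (by simp)
      (by rw [← ofAdd_nsmul]; simp) (by simp)
    have h1 := congrArg χ hij
    rw [map_mul, map_zpow, map_zpow, hχa, hχb, one_zpow, mul_one, map_one χ, ← ofAdd_zsmul,
      ofAdd_eq_one, zsmul_one, ZMod.intCast_zmod_eq_zero_iff_dvd] at h1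
    push_cast at h1
    obtain ⟨l, rfl⟩ := h1
    refine ⟨l, rfl, ?_⟩
    rw [hb, ← zpow_add, M3a_zpow_eq_one_iff hp hodd hf hhd hdh hhe, add_comm] at hij
    exact hij
  · rintro ⟨l, rfl, hj⟩
    rw [hb, ← zpow_add, M3a_zpow_eq_one_iff hp hodd hf hhd hdh hhe, add_comm]
    exact hj

lemma M3_word_eq_word_iff {p d e h f : ℕ} (hp : p.Prime) (hodd : Odd p) (hf : 0 < f)
    (hhd : h - d ≤ f) (hdh : d < h) (hhe : h < e) (i i' : ℕ) (j j' : ℤ) :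
    M3b p d e h f ^ i * M3a p d e h f ^ j = M3b p d e h f ^ i' * M3a p d e h f ^ j' ↔
      ∃ l : ℤ, (i : ℤ) - i' = (p : ℤ) ^ (d + e - h) * l ∧ (p : ℤ) ^ h ∣ j - j' + p ^ d * l := by
  rw [← M3_word_eq_one_iff hp hodd hf hhd hdh hhe, sub_eq_neg_add, zpow_add, zpow_sub, zpow_neg,
    zpow_natCast, zpow_natCast, ← mul_assoc, mul_inv_eq_one, mul_assoc, inv_mul_eq_iff_eq_mul]

lemma M3_exists_word {p d e h f : ℕ} (hp : p.Prime) (hdh : d ≤ h) (hhe : h ≤ e)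
    (g : M3 p d e h f) : ∃ (i : ℕ) (j : ℤ), g = M3b p d e h f ^ i * M3a p d e h f ^ j := by
  have hmul := word_mul_word (M3a_mul_M3b p d e h f)
  let H : Subgroup (M3 p d e h f) :=
    { carrier := {g | ∃ (i : ℕ) (j : ℤ), g = M3b p d e h f ^ i * M3a p d e h f ^ j}
      one_mem' := ⟨0, 0, by simp⟩
      mul_mem' := by
        rintro _ _ ⟨i, j, rfl⟩ ⟨k, l, rfl⟩
        exact ⟨_, _, hmul i k j l⟩
      inv_mem' := by
        rintro _ ⟨i, j, rfl⟩
        have hb : (M3b p d e h f ^ i)⁻¹ = M3b p d e h f ^ (i * (p ^ e - 1)) := by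
          rw [inv_eq_iff_mul_eq_one, ← pow_add]
          have : i + i * (p ^ e - 1) = p ^ e * i := by
            obtain ⟨n, hn⟩ := Nat.exists_eq_succ_of_ne_zero (pow_ne_zero e hp.ne_zero)
            rw [hn, Nat.succ_sub_one, Nat.succ_eq_add_one]
            ring
          rw [this, pow_mul, M3b_pow_pow hdh hhe, one_pow]
        rw [mul_inv_rev, hb, ← zpow_neg]
        exact ⟨_, _, zpow_mul_pow_of_mul_eq (M3a_mul_M3b p d e h f) _ _⟩ }
  have hH : H = ⊤ := by
    rw [eq_top_iff, ← PresentedGroup.closure_range_of, Subgroup.closure_le]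
    rintro _ ⟨i, rfl⟩
    fin_cases i
    · exact ⟨0, 1, by simp [M3a]⟩
    · exact ⟨1, 0, by simp [M3b]⟩
  have : g ∈ H := hH ▸ Subgroup.mem_top g
  exact this

lemma M3_finite {p d e h f : ℕ} (hp : p.Prime) (hdh : d ≤ h) (hhe : h ≤ e) :
    Finite (M3 p d e h f) := by
  have ha : IsOfFinOrder (M3a p d e h f) :=
    isOfFinOrder_iff_pow_eq_one.2 ⟨p ^ h, pow_pos hp.pos _, M3a_pow ..⟩
  have hb : IsOfFinOrder (M3b p d e h f) :=
    isOfFinOrder_iff_pow_eq_one.2 ⟨p ^ e, pow_pos hp.pos _, M3b_pow_pow hdh hhe⟩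
  have hfa : Set.Finite (Subgroup.zpowers (M3a p d e h f) : Set (M3 p d e h f)) :=
    finite_zpowers.2 ha
  have hfb : Set.Finite (Subgroup.zpowers (M3b p d e h f) : Set (M3 p d e h f)) :=
    finite_zpowers.2 hb
  refine Set.finite_univ_iff.1 ((Set.Finite.image2 (fun x y => x * y) hfb hfa).subset ?_)
  intro g _
  obtain ⟨i, j, rfl⟩ := M3_exists_word hp hdh hhe g
  exact ⟨_, Subgroup.npow_mem_zpowers _ i, _, Subgroup.zpow_mem_zpowers _ j, rfl⟩

end M3

section M3Relations

variable {p d e h f α β δ : ℕ}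

/-- The conjugation relation for the pair `(bʳaˢ, b^(t+1)aᵘ)` in `M₃`. -/
lemma M3_conjugation_relation_iff (hp : p.Prime) (hodd : Odd p) (hf : 0 < f) (hδf : δ ≤ f)
    (hα : 0 < α) (hβ : 0 < β) (hδ : 0 < δ) (hd : d = f + α) (hh : h = d + δ) (he : e = h + β)
    (r t : ℕ) (s u : ℤ) :
    (M3b p d e h f ^ r * M3a p d e h f ^ s) * (M3b p d e h f ^ (t + 1) * M3a p d e h f ^ u) =
        (M3b p d e h f ^ (t + 1) * M3a p d e h f ^ u) *
          (M3b p d e h f ^ r * M3a p d e h f ^ s) ^ (1 + p ^ f) ↔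
      ∃ k : ℤ, (r : ℤ) = p ^ (α + β) * k ∧ (p : ℤ) ^ (d + δ) ∣
        s * (1 + p ^ f) * ((1 + p ^ f) ^ t - 1) - k * p ^ d * (1 + u * p ^ β) := by
  have hp0 : (p : ℤ) ≠ 0 := by exact_mod_cast hp.ne_zero
  have hab := M3a_mul_M3b p d e h f
  rw [word_pow hab, word_mul_word hab, word_mul_word hab,
    M3_word_eq_word_iff hp hodd hf (by omega) (by omega) (by omega),
    show d + e - h = f + (α + β) by omega]
  have key : ∀ k : ℤ, (r : ℤ) = p ^ (α + β) * k →
      ((p : ℤ) ^ h ∣ s * (1 + (p : ℤ) ^ f) ^ (t + 1) + u -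
          (u * (1 + (p : ℤ) ^ f) ^ (r * (1 + p ^ f)) +
            s * ∑ i ∈ Finset.range (1 + p ^ f), ((1 + (p : ℤ) ^ f) ^ r) ^ i) + p ^ d * -k ↔
        (p : ℤ) ^ (d + δ) ∣
          s * (1 + p ^ f) * ((1 + p ^ f) ^ t - 1) - k * p ^ d * (1 + u * p ^ β)) := by
    intro k hk
    have hr : p ^ (α + β) ∣ r := by
      have : (p : ℤ) ^ (α + β) ∣ r := ⟨k, hk⟩
      exact_mod_cast this
    have h1 : (p : ℤ) ^ h ∣ (1 + (p : ℤ) ^ f) ^ (r * (1 + p ^ f)) - 1 - p ^ (d + β) * k := by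
      obtain ⟨y, hy⟩ := (pow_dvd_pow (p : ℤ) (by omega : h ≤ α + β + f + f)).trans
        (one_add_pow_pow_modulus hodd hf (hr.mul_right (1 + p ^ f)))
      obtain ⟨z, hz⟩ := pow_dvd_pow (p : ℤ) (by omega : h ≤ α + β + f + f)
      refine ⟨y + z * k, ?_⟩
      push_cast at hy
      rw [hk] at hy
      have h3 : (p : ℤ) ^ (d + β) = p ^ f * p ^ (α + β) := by
        rw [hd]; ring
      have h4 : (p : ℤ) ^ (α + β + f + f) = p ^ f * p ^ f * p ^ (α + β) := by ring
      rw [h4] at hz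
      rw [h3]
      linear_combination hy + k * hz
    have h2 : (p : ℤ) ^ h ∣
        ∑ i ∈ Finset.range (1 + p ^ f), ((1 + (p : ℤ) ^ f) ^ r) ^ i - (1 + p ^ f) := by
      have hx : (p : ℤ) ^ (f + (α + β)) ∣ (1 + (p : ℤ) ^ f) ^ r - 1 := by
        rw [add_comm]
        exact pow_dvd_one_add_pow_pow_sub_one hodd hf hr
      rw [add_comm 1, geom_sum_succ]
      obtain ⟨y, hy⟩ := (pow_dvd_pow (p : ℤ) (by omega : h ≤ f + (f + (α + β)))).trans
        (geom_sum_modulus hodd (by omega) hx (dvd_refl (p ^ f)))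
      obtain ⟨z, hz⟩ := hx
      obtain ⟨w, hw⟩ := pow_dvd_pow (p : ℤ) (by omega : h ≤ f + (f + (α + β)))
      refine ⟨(1 + (p : ℤ) ^ f) ^ r * y + w * z, ?_⟩
      push_cast at hy
      rw [pow_add _ f (f + (α + β))] at hw
      linear_combination (1 + (p : ℤ) ^ f) ^ r * hy + (p : ℤ) ^ f * hz + z * hw
    rw [← hh]
    apply dvd_iff_dvd_of_dvd_sub
    convert (h1.mul_left (-u)).add (h2.mul_left (-s)) using 1
    ring
  constructor
  · rintro ⟨l, hl, hdvd⟩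
    have hk : (r : ℤ) = p ^ (α + β) * -l := by
      have : (p : ℤ) ^ f * r = p ^ f * (p ^ (α + β) * -l) := by
        push_cast at hl
        rw [pow_add] at hl
        linear_combination -hl
      exact mul_left_cancel₀ (pow_ne_zero _ hp0) this
    exact ⟨-l, hk, (key _ hk).1 (by rwa [neg_neg])⟩
  · rintro ⟨k, hk, hdvd⟩
    refine ⟨-k, ?_, (key k hk).2 hdvd⟩
    push_cast
    rw [hk]
    ring

/-- The power relation for the pair `(bʳaˢ, b^(t+1)aᵘ)` in `M₃`. -/
lemma M3_power_relation_iff (hp : p.Prime) (hodd : Odd p) (hf : 0 < f) (hδf : δ ≤ f)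
    (hα : 0 < α) (hβ : 0 < β) (hδ : 0 < δ) (hd : d = f + α) (hh : h = d + δ) (he : e = h + β)
    (r t : ℕ) (s u k : ℤ) (hk : (r : ℤ) = p ^ (α + β) * k) :
    (M3b p d e h f ^ (t + 1) * M3a p d e h f ^ u) ^ p ^ (d + e - h) =
        (M3b p d e h f ^ r * M3a p d e h f ^ s) ^ p ^ d ↔
      (p : ℤ) ^ δ ∣ u * p ^ β - s + (t + 1 - p ^ α * k) := by
  have hp0 : (p : ℤ) ≠ 0 := by exact_mod_cast hp.ne_zero
  have hab := M3a_mul_M3b p d e h f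
  have hr : p ^ (α + β) ∣ r := by
    have : (p : ℤ) ^ (α + β) ∣ r := ⟨k, hk⟩
    exact_mod_cast this
  have hN : d + e - h = d + β := by omega
  rw [word_pow hab, word_pow hab,
    M3_word_eq_word_iff hp hodd hf (by omega) (by omega) (by omega), hN]
  have h1 : (p : ℤ) ^ h ∣ ∑ i ∈ Finset.range (p ^ (d + β)), ((1 + (p : ℤ) ^ f) ^ (t + 1)) ^ i -
      p ^ (d + β) := by
    refine (pow_dvd_pow (p : ℤ) (by omega : h ≤ d + β + f)).trans ?_
    exact geom_sum_prime_pow_modulus hodd hf (dvd_pow_sub_one_of_dvd_sub_one (by simp) _) _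
  have h2 : (p : ℤ) ^ h ∣ ∑ i ∈ Finset.range (p ^ d), ((1 + (p : ℤ) ^ f) ^ r) ^ i - p ^ d := by
    refine (pow_dvd_pow (p : ℤ) (by omega : h ≤ d + (α + β + f))).trans ?_
    exact geom_sum_prime_pow_modulus hodd (by omega) (pow_dvd_one_add_pow_pow_sub_one hodd hf hr) _
  have hl : (((t + 1) * p ^ (d + β) : ℕ) : ℤ) - ((r * p ^ d : ℕ) : ℤ) =
      (p : ℤ) ^ (d + β) * (t + 1 - p ^ α * k) := by
    push_cast
    rw [hk]
    ring
  have key : ((p : ℤ) ^ h ∣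
      u * ∑ i ∈ Finset.range (p ^ (d + β)), ((1 + (p : ℤ) ^ f) ^ (t + 1)) ^ i -
        s * ∑ i ∈ Finset.range (p ^ d), ((1 + (p : ℤ) ^ f) ^ r) ^ i +
        p ^ d * (t + 1 - p ^ α * k)) ↔
      (p : ℤ) ^ δ ∣ u * p ^ β - s + (t + 1 - p ^ α * k) := by
    rw [← mul_dvd_mul_iff_left (a := (p : ℤ) ^ d) (b := (p : ℤ) ^ δ) (pow_ne_zero d hp0),
      ← pow_add, ← hh]
    apply dvd_iff_dvd_of_dvd_sub
    convert (h1.mul_left u).sub (h2.mul_left s) using 1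
    ring
  rw [← key, hl]
  constructor
  · rintro ⟨l, h3, h4⟩
    rwa [mul_left_cancel₀ (pow_ne_zero _ hp0) h3]
  · exact fun h3 => ⟨_, rfl, h3⟩

/-- If `p ^ (α + β) ∣ r` and `p ^ h ∣ s * p ^ n`, then `bʳaˢ` has exponent `p ^ n` in `M₃`,
provided that `f ≤ n` and `h ≤ d + n - f`. -/
lemma M3_word_pow_eq_one (hp : p.Prime) (hodd : Odd p) (hf : 0 < f) (hδf : δ ≤ f)
    (hα : 0 < α) (hβ : 0 < β) (hδ : 0 < δ) (hd : d = f + α) (hh : h = d + δ) (he : e = h + β)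
    {r n : ℕ} (hr : p ^ (α + β) ∣ r) (hn : f ≤ n) (hnh : h ≤ d + n - f) {s : ℤ}
    (hs : (p : ℤ) ^ h ∣ s * p ^ n) :
    (M3b p d e h f ^ r * M3a p d e h f ^ s) ^ p ^ n = 1 := by
  obtain ⟨k, rfl⟩ := hr
  have h1 := M3_word_eq_word_iff hp hodd hf (by omega : h - d ≤ f) (by omega) (by omega : h < e)
    (p ^ (α + β) * k * p ^ n) 0
    (s * ∑ i ∈ Finset.range (p ^ n), ((1 + (p : ℤ) ^ f) ^ (p ^ (α + β) * k)) ^ i) 0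
  rw [pow_zero, zpow_zero, one_mul] at h1
  rw [word_pow (M3a_mul_M3b p d e h f), h1]
  obtain ⟨m, rfl⟩ := Nat.exists_eq_add_of_le hn
  refine ⟨p ^ m * k, ?_, ?_⟩
  · rw [show d + e - h = f + α + β by omega]
    push_cast
    ring
  · rw [sub_zero, ← mul_assoc, ← pow_add]
    refine dvd_add ?_ ((pow_dvd_pow (p : ℤ) (by omega)).mul_right _)
    obtain ⟨y, hy⟩ := geom_sum_prime_pow_modulus hodd hf (x := (1 + (p : ℤ) ^ f) ^ (p ^ (α + β) * k))
      (dvd_pow_sub_one_of_dvd_sub_one (by simp) _) (f + m)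
    obtain ⟨z, hz⟩ := hs
    refine ⟨z * (1 + p ^ f * y), ?_⟩
    rw [sub_eq_iff_eq_add] at hy
    rw [hy]
    linear_combination (1 + p ^ f * y) * hz

/-- A subgroup of `M₃` containing `bʳaˢ` and `bᵗaᵘ` with `p ∣ r` and `p ∤ s, t` is everything. -/
lemma M3_subgroup_eq_top (hp : p.Prime) (hodd : Odd p) (hf : 0 < f) (hdh : d ≤ h) (hhe : h ≤ e)
    {r t : ℕ} {s u : ℤ} (hr : p ∣ r) (hs : ¬ (p : ℤ) ∣ s) (ht : ¬ p ∣ t)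
    (H : Subgroup (M3 p d e h f)) (hx : M3b p d e h f ^ r * M3a p d e h f ^ s ∈ H)
    (hy : M3b p d e h f ^ t * M3a p d e h f ^ u ∈ H) : H = ⊤ := by
  have hab := M3a_mul_M3b p d e h f
  have hpp : Prime (p : ℤ) := Nat.prime_iff_prime_int.1 hp
  have hcop : ∀ (g : M3 p d e h f) (v n : ℤ), ¬ (p : ℤ) ∣ n → g ^ (v * p) ∈ H → g ^ (v * n) ∈ H →
      g ^ v ∈ H := by
    intro g v n hn h1 h2
    obtain ⟨x, y, hxy⟩ := (hpp.irreducible.coprime_iff_not_dvd).2 hn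
    have h3 : v = v * p * x + v * n * y := by linear_combination -v * hxy
    rw [h3, zpow_add, zpow_mul, zpow_mul _ (v * n)]
    exact H.mul_mem (H.zpow_mem h1 x) (H.zpow_mem h2 y)
  have hsum : ∀ i n : ℕ, ∃ y : ℤ, ∑ j ∈ Finset.range (p ^ i), ((1 + (p : ℤ) ^ f) ^ n) ^ j =
      p ^ i + p ^ i * p * y := by
    intro i n
    obtain ⟨y, hy⟩ := geom_sum_prime_pow_modulus hodd one_pos (x := (1 + (p : ℤ) ^ f) ^ n)
      (dvd_pow_sub_one_of_dvd_sub_one (by simpa using dvd_pow_self (p : ℤ) hf.ne') _) i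
    exact ⟨y, by linear_combination hy⟩
  have key : ∀ i : ℕ, M3a p d e h f ^ ((p : ℤ) ^ (e - i)) ∈ H ∧
      M3b p d e h f ^ ((p : ℤ) ^ (e - i)) ∈ H := by
    intro i
    induction i with
    | zero =>
      constructor
      · have h1 : (p : ℤ) ^ e = p ^ h * p ^ (e - h) := by
          rw [← pow_add, Nat.add_sub_cancel' hhe]
        rw [Nat.sub_zero, h1, zpow_mul, show ((p : ℤ) ^ h) = ((p ^ h : ℕ) : ℤ) by push_cast; rfl,
          zpow_natCast, M3a_pow, one_zpow]
        exact H.one_mem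
      · rw [Nat.sub_zero, show ((p : ℤ) ^ e) = ((p ^ e : ℕ) : ℤ) by push_cast; rfl,
          zpow_natCast, M3b_pow_pow hdh hhe]
        exact H.one_mem
    | succ i ih =>
      rcases Nat.lt_or_ge i e with hi | hi
      swap
      · rwa [show e - (i + 1) = e - i by omega]
      obtain ⟨n, hn⟩ : ∃ n, n = e - (i + 1) := ⟨_, rfl⟩
      rw [show e - i = n + 1 by omega, pow_succ] at ih
      rw [← hn]
      obtain ⟨iha, ihb⟩ := ih
      have ha : M3a p d e h f ^ ((p : ℤ) ^ n) ∈ H := by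
        refine hcop _ _ s hs iha ?_
        have h1 := H.pow_mem hx (p ^ n)
        obtain ⟨y, hy⟩ := hsum n r
        obtain ⟨m, rfl⟩ := hr
        have h2 : M3b p d e h f ^ (p * m * p ^ n) ∈ H := by
          have := H.zpow_mem ihb m
          rw [← zpow_mul, show (p : ℤ) ^ n * p * m = ((p * m * p ^ n : ℕ) : ℤ) by
            push_cast; ring, zpow_natCast] at this
          exact this
        rw [word_pow hab, hy, H.mul_mem_cancel_left h2,
          show s * ((p : ℤ) ^ n + p ^ n * p * y) = p ^ n * s + p ^ n * p * (s * y) by ring,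
          zpow_add, zpow_mul _ _ (s * y), H.mul_mem_cancel_right (H.zpow_mem iha _)] at h1
        exact h1
      refine ⟨ha, hcop _ _ t (by exact_mod_cast ht) ihb ?_⟩
      have h1 := H.pow_mem hy (p ^ n)
      obtain ⟨y, hy⟩ := hsum n t
      rw [word_pow hab, hy,
        show u * ((p : ℤ) ^ n + p ^ n * p * y) = p ^ n * (u * (1 + p * y)) by ring, zpow_mul,
        H.mul_mem_cancel_right (H.zpow_mem ha _)] at h1
      rw [show (p : ℤ) ^ n * t = ((t * p ^ n : ℕ) : ℤ) by push_cast; ring, zpow_natCast]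
      exact h1
  have hab1 := key e
  rw [Nat.sub_self, pow_zero, zpow_one, zpow_one] at hab1
  rw [eq_top_iff]
  intro g _
  obtain ⟨i, j, rfl⟩ := M3_exists_word hp hdh hhe g
  exact H.mul_mem (H.pow_mem hab1.2 i) (H.zpow_mem hab1.1 j)

lemma M3_exists_mulAut_iff (hp : p.Prime) (hodd : Odd p) (hf : 0 < f) (hδf : δ ≤ f)
    (hα : 0 < α) (hβ : 0 < β) (hδ : 0 < δ) (hd : d = f + α) (hh : h = d + δ) (he : e = h + β)
    (r t : ℕ) (s u : ℤ) :
    (∃ φ : MulAut (M3 p d e h f),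
        φ (M3a p d e h f) = M3b p d e h f ^ r * M3a p d e h f ^ s ∧
        φ (M3b p d e h f) = M3b p d e h f ^ (t + 1) * M3a p d e h f ^ u) ↔
      ((p : ℤ) ^ (α + β) ∣ r ∧ (p : ℤ) ^ δ ∣ s - (1 + u * p ^ β) ∧ (p : ℤ) ^ α ∣ t ∧
        (p : ℤ) ^ (α + β + δ) ∣ r - t * p ^ β) := by
  have hp0 : (p : ℤ) ≠ 0 := by exact_mod_cast hp.ne_zero
  have hpp : Prime (p : ℤ) := Nat.prime_iff_prime_int.1 hp
  have hconj := M3_conjugation_relation_iff hp hodd hf hδf hα hβ hδ hd hh he r t s u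
  have hpow := M3_power_relation_iff hp hodd hf hδf hα hβ hδ hd hh he r t s u
  constructor
  · rintro ⟨φ, hφa, hφb⟩
    have h1 := congrArg φ (M3a_mul_M3b p d e h f)
    rw [show (1 : ℤ) + p ^ f = ((1 + p ^ f : ℕ) : ℤ) by push_cast; rfl, zpow_natCast, map_mul,
      map_mul, map_pow, hφa, hφb, hconj] at h1
    obtain ⟨k, hk, hA⟩ := h1
    have h2 := congrArg φ (M3b_pow p d e h f)
    rw [map_pow, map_pow, hφa, hφb, hpow k hk] at h2
    have hr : p ^ (α + β) ∣ r := by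
      have : (p : ℤ) ^ (α + β) ∣ r := ⟨k, hk⟩
      exact_mod_cast this
    have hs : ¬ (p : ℤ) ∣ s := by
      rintro ⟨s', rfl⟩
      have h3 := M3_word_pow_eq_one hp hodd hf hδf hα hβ hδ hd hh he hr (n := h - 1) (by omega)
        (by omega) (s := p * s')
        ⟨s', by obtain ⟨m, rfl⟩ : ∃ m, h = m + 1 := ⟨h - 1, by omega⟩
                rw [Nat.add_sub_cancel]; ring⟩
      rw [← hφa, ← map_pow, map_eq_one_iff φ φ.injective, ← zpow_natCast,
        M3a_zpow_eq_one_iff hp hodd hf (by omega) (by omega) (by omega)] at h3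
      push_cast at h3
      rw [pow_dvd_pow_iff hp0 hpp.not_isUnit] at h3
      omega
    obtain ⟨⟨h4, h5, h6⟩, -⟩ :=
      (exponent_conditions_iff hp hodd hf hδf hd hα hβ s k u t).1 ⟨hA, h2, hs⟩
    exact ⟨⟨k, hk⟩, h4, h5, by rwa [hk]⟩
  · rintro ⟨⟨k, hk⟩, h4, h5, h6⟩
    have hr : p ^ (α + β) ∣ r := by
      have : (p : ℤ) ^ (α + β) ∣ r := ⟨k, hk⟩
      exact_mod_cast this
    have hs : ¬ (p : ℤ) ∣ s := by
      intro hs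
      have h7 := (dvd_sub_right hs).1 ((dvd_pow_self (p : ℤ) hδ.ne').trans h4)
      rw [dvd_add_left ((dvd_pow_self (p : ℤ) hβ.ne').mul_left u)] at h7
      exact hpp.not_isUnit (isUnit_of_dvd_one h7)
    have ht : ¬ p ∣ t + 1 := by
      intro ht
      have h7 : p ^ α ∣ t := by exact_mod_cast h5
      rw [← Nat.dvd_add_iff_right ((dvd_pow_self p hα.ne').trans h7)] at ht
      exact hp.one_lt.ne' (Nat.dvd_one.1 ht)
    rw [hk] at h6
    obtain ⟨hA, hB, -⟩ :=
      (exponent_conditions_iff hp hodd hf hδf hd hα hβ s k u t).2 ⟨⟨h4, h5, h6⟩, hs⟩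
    obtain ⟨ψ, hψa, hψb⟩ := M3.exists_hom _ _
      (M3_word_pow_eq_one hp hodd hf hδf hα hβ hδ hd hh he hr (n := h) (s := s) (by omega)
        (by omega) (Dvd.intro_left s rfl)) ((hpow k hk).2 hB) (hconj.2 ⟨k, hk, hA⟩)
    have hsurj : Function.Surjective ψ := by
      rw [← MonoidHom.range_eq_top]
      exact M3_subgroup_eq_top hp hodd hf (by omega) (by omega)
        ((dvd_pow_self p (by omega)).trans hr) hs ht _ ⟨_, hψa⟩ ⟨_, hψb⟩
    have := M3_finite (d := d) (f := f) hp (by omega : d ≤ h) (by omega : h ≤ e)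
    exact ⟨MulEquiv.ofBijective ψ ⟨Finite.injective_iff_surjective.2 hsurj, hsurj⟩, hψa, hψb⟩

end M3Relations

/-- For `G = M₃(p,d,e,h,f)` with `h - d ≤ f < d < h < e`, canonical
generators `a, b`, and integers `r, s, t, u`, the assignment `a ↦ bʳaˢ, b ↦ bᵗaᵘ` extends
to an automorphism of `G` iff `r ≡ 0 (mod p^(d+e-h-f))`, `s ≡ 1 + u·p^(e-h) (mod p^(h-d))`,
`t ≡ 1 (mod p^(d-f))`, and `r ≡ (t-1)·p^(e-h) (mod p^(e-f))`. -/
theorem stmt_15 (p d e h f : ℕ) (hp : p.Prime) (hodd : Odd p)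
    (hf : 0 < f) (hhd : h - d ≤ f) (hfd : f < d) (hdh : d < h) (hhe : h < e)
    (r s t u : ℤ) :
    (∃ φ : MulAut (M3 p d e h f),
        φ (M3a p d e h f) = M3b p d e h f ^ r * M3a p d e h f ^ s ∧
        φ (M3b p d e h f) = M3b p d e h f ^ t * M3a p d e h f ^ u) ↔
      ((p : ℤ) ^ (d + e - h - f) ∣ r ∧
       (p : ℤ) ^ (h - d) ∣ (s - (1 + u * (p : ℤ) ^ (e - h))) ∧
       (p : ℤ) ^ (d - f) ∣ (t - 1) ∧
       (p : ℤ) ^ (e - f) ∣ (r - (t - 1) * (p : ℤ) ^ (e - h))) := by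
  obtain ⟨α, hd⟩ := Nat.exists_eq_add_of_le hfd.le
  obtain ⟨δ, hh⟩ := Nat.exists_eq_add_of_le hdh.le
  obtain ⟨β, he⟩ := Nat.exists_eq_add_of_le hhe.le
  have hp1 : (1 : ℤ) ≤ p := by exact_mod_cast hp.one_le
  have hrep : ∀ x : ℤ, ∃ n : ℕ, (p : ℤ) ^ e ∣ x - n := by
    intro x
    have h1 : (0 : ℤ) < p ^ e := by positivity
    obtain ⟨n, hn⟩ := Int.eq_ofNat_of_zero_le (Int.emod_nonneg x h1.ne')
    exact ⟨n, hn ▸ Int.dvd_self_sub_emod⟩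
  obtain ⟨r', hr⟩ := hrep r
  obtain ⟨t', ht⟩ := hrep (t - 1)
  have hb : ∀ (x : ℤ) (n : ℕ), (p : ℤ) ^ e ∣ x - n → M3b p d e h f ^ x = M3b p d e h f ^ n := by
    rintro x n ⟨k, hk⟩
    rw [sub_eq_iff_eq_add.1 hk, zpow_add, zpow_mul,
      show ((p : ℤ) ^ e) = ((p ^ e : ℕ) : ℤ) by push_cast; rfl, zpow_natCast,
      M3b_pow_pow hdh.le hhe.le, one_zpow, one_mul, zpow_natCast]
  rw [hb r r' hr, hb t (t' + 1) (by push_cast; convert ht using 1; ring),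
    M3_exists_mulAut_iff hp hodd hf (by omega : δ ≤ f) (by omega : 0 < α) (by omega : 0 < β)
      (by omega) hd hh he,
    show d + e - h - f = α + β by omega, show h - d = δ by omega, show d - f = α by omega,
    show e - h = β by omega, show e - f = α + β + δ by omega]
  have hr1 : (p : ℤ) ^ (α + β) ∣ r' ↔ (p : ℤ) ^ (α + β) ∣ r :=
    (dvd_iff_dvd_of_dvd_sub ((pow_dvd_pow (p : ℤ) (by omega)).trans hr)).symm
  have ht1 : (p : ℤ) ^ α ∣ t' ↔ (p : ℤ) ^ α ∣ t - 1 :=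
    (dvd_iff_dvd_of_dvd_sub ((pow_dvd_pow (p : ℤ) (by omega)).trans ht)).symm
  have hrt : (p : ℤ) ^ (α + β + δ) ∣ r' - t' * p ^ β ↔
      (p : ℤ) ^ (α + β + δ) ∣ r - (t - 1) * p ^ β := by
    refine (dvd_iff_dvd_of_dvd_sub ((pow_dvd_pow (p : ℤ) (by omega : _ ≤ e)).trans ?_)).symm
    convert hr.sub (ht.mul_right (p ^ β)) using 1
    ring
  rw [hr1, ht1, hrt]
end
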